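/- Every bivariate real stable polynomial p(x,y) of total degree d can be written as p(x,y) = c·det(xA + yB + C) for some real positive semidefinite d×d matrices A, B, a real symmetric d×d matrix C, and a real constant c (Helton–Vinnikov determinantal representation). -/

import Mathlib

/-- A bivariate real polynomial is real stable if it is identically zero or does not
vanish when both coordinates have positive imaginary part. -/
def RealStable {k : ℕ} (p : MvPolynomial (Fin k) ℝ) : Prop :=
  p = 0 ∨ ∀ z : Fin k → ℂ, (∀ i, 0 < (z i).im) → MvPolynomial.aeval z p ≠ 0

namespace HV

/-- Exponents of the monomials of degree `d` in three variables. -/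
abbrev Idx (d : ℕ) : Type := {m : Fin 3 →₀ ℕ // m ∈ (Finset.univ : Finset (Fin 3)).finsuppAntidiag d}

theorem idx_sum {d : ℕ} (m : Idx d) : m.1 0 + m.1 1 + m.1 2 = d := by
  have := (Finset.mem_finsuppAntidiag.1 m.2).1
  simpa [Fin.sum_univ_three] using this

theorem idx_mem {d : ℕ} {m : Fin 3 →₀ ℕ} (h : m 0 + m 1 + m 2 = d) :
    m ∈ (Finset.univ : Finset (Fin 3)).finsuppAntidiag d := by
  rw [Finset.mem_finsuppAntidiag]
  refine ⟨by simpa [Fin.sum_univ_three] using h, Finset.subset_univ _⟩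

theorem degree_eq (m : Fin 3 →₀ ℕ) : m.degree = m 0 + m 1 + m 2 := by
  rw [Finsupp.degree_eq_sum, Fin.sum_univ_three]

theorem card_idx (d : ℕ) : Fintype.card (Idx d) = (d + 2).choose 2 := by
  rw [Fintype.card_coe, Finset.card_finsuppAntidiag_nat_eq_choose]
  simp only [Finset.card_univ, Fintype.card_fin]
  rw [show 3 + d - 1 = d + 2 by omega, ← Nat.choose_symm_add]

/-- Evaluation of the form with coefficients `c` at a complex point. -/
noncomputable def ev {d : ℕ} (c : Idx d → ℝ) (t x y : ℂ) : ℂ :=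
  ∑ m : Idx d, (c m : ℂ) * (t ^ m.1 0 * x ^ m.1 1 * y ^ m.1 2)

/-- Evaluation of the form with coefficients `c` at a real point. -/
noncomputable def evR {d : ℕ} (c : Idx d → ℝ) (t x y : ℝ) : ℝ :=
  ∑ m : Idx d, c m * (t ^ m.1 0 * x ^ m.1 1 * y ^ m.1 2)

/-- Partial derivative in the first variable. -/
noncomputable def evt {d : ℕ} (c : Idx d → ℝ) (t x y : ℂ) : ℂ :=
  ∑ m : Idx d, (c m : ℂ) * (m.1 0 * t ^ (m.1 0 - 1) * x ^ m.1 1 * y ^ m.1 2)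

/-- Partial derivative in the second variable. -/
noncomputable def evx {d : ℕ} (c : Idx d → ℝ) (t x y : ℂ) : ℂ :=
  ∑ m : Idx d, (c m : ℂ) * (t ^ m.1 0 * (m.1 1 * x ^ (m.1 1 - 1)) * y ^ m.1 2)

/-- Divided difference in the first variable. -/
noncomputable def evD {d : ℕ} (c : Idx d → ℝ) (t s x y : ℂ) : ℂ :=
  ∑ m : Idx d, (c m : ℂ) *
    ((∑ i ∈ Finset.range (m.1 0), t ^ i * s ^ (m.1 0 - 1 - i)) * x ^ m.1 1 * y ^ m.1 2)

variable {d : ℕ}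

theorem ev_ofReal (c : Idx d → ℝ) (t x y : ℝ) : ev c t x y = (evR c t x y : ℂ) := by
  simp [ev, evR]

theorem ev_conj (c : Idx d → ℝ) (t x y : ℂ) :
    ev c (starRingEnd ℂ t) (starRingEnd ℂ x) (starRingEnd ℂ y) = starRingEnd ℂ (ev c t x y) := by
  simp [ev]

theorem evt_conj (c : Idx d → ℝ) (t x y : ℂ) :
    evt c (starRingEnd ℂ t) (starRingEnd ℂ x) (starRingEnd ℂ y) = starRingEnd ℂ (evt c t x y) := by
  simp [evt]

theorem evx_conj (c : Idx d → ℝ) (t x y : ℂ) :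
    evx c (starRingEnd ℂ t) (starRingEnd ℂ x) (starRingEnd ℂ y) = starRingEnd ℂ (evx c t x y) := by
  simp [evx]

theorem evD_mul (c : Idx d → ℝ) (t s x y : ℂ) :
    (t - s) * evD c t s x y = ev c t x y - ev c s x y := by
  unfold evD ev
  rw [Finset.mul_sum, ← Finset.sum_sub_distrib]
  refine Finset.sum_congr rfl fun m _ => ?_
  have := (Commute.all t s).mul_geom_sum₂ (m.1 0)
  linear_combination ((c m : ℂ) * x ^ m.1 1 * y ^ m.1 2) * this

theorem evD_self (c : Idx d → ℝ) (t x y : ℂ) : evD c t t x y = evt c t x y := by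
  unfold evD evt
  refine Finset.sum_congr rfl fun m _ => ?_
  rw [geom_sum₂_self]

theorem ev_smul (c : Idx d → ℝ) (l t x y : ℂ) :
    ev c (l * t) (l * x) (l * y) = l ^ d * ev c t x y := by
  unfold ev
  rw [Finset.mul_sum]
  refine Finset.sum_congr rfl fun m _ => ?_
  have h : l ^ d = l ^ m.1 0 * l ^ m.1 1 * l ^ m.1 2 := by
    rw [← pow_add, ← pow_add, idx_sum]
  rw [h]; ring

theorem evD_smul (c : Idx d → ℝ) (l t s x y : ℂ) :
    evD c (l * t) (l * s) (l * x) (l * y) * l = l ^ d * evD c t s x y := by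
  unfold evD
  rw [Finset.mul_sum, Finset.sum_mul]
  refine Finset.sum_congr rfl fun m _ => ?_
  have h : l ^ d = l ^ m.1 0 * l ^ m.1 1 * l ^ m.1 2 := by
    rw [← pow_add, ← pow_add, idx_sum]
  have h2 : (∑ i ∈ Finset.range (m.1 0), (l * t) ^ i * (l * s) ^ (m.1 0 - 1 - i)) * l =
      l ^ m.1 0 * ∑ i ∈ Finset.range (m.1 0), t ^ i * s ^ (m.1 0 - 1 - i) := by
    rw [Finset.mul_sum, Finset.sum_mul]
    refine Finset.sum_congr rfl fun i hi => ?_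
    have : l ^ m.1 0 = l ^ i * l ^ (m.1 0 - 1 - i) * l := by
      rw [← pow_add, ← pow_succ]; congr 1
      have := Finset.mem_range.1 hi; omega
    rw [this]; ring
  rw [h, mul_pow, mul_pow]
  linear_combination ((c m : ℂ) * l ^ m.1 1 * x ^ m.1 1 * (l ^ m.1 2 * y ^ m.1 2)) * h2

/-- The coefficients of a polynomial in degree `d`. -/
noncomputable def cof (d : ℕ) (q : MvPolynomial (Fin 3) ℝ) : Idx d → ℝ := fun m => q.coeff m.1

theorem aeval_homog {K : Type*} [CommRing K] [Algebra ℝ K] {q : MvPolynomial (Fin 3) ℝ}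
    (hq : q.IsHomogeneous d) (t x y : K) :
    MvPolynomial.aeval ![t, x, y] q =
      ∑ m : Idx d, algebraMap ℝ K (q.coeff m.1) * (t ^ m.1 0 * x ^ m.1 1 * y ^ m.1 2) := by
  rw [MvPolynomial.aeval_def, MvPolynomial.eval₂_eq']
  simp only [Fin.prod_univ_three, Matrix.cons_val_zero, Matrix.cons_val_one,
    Matrix.cons_val]
  rw [Finset.sum_coe_sort ((Finset.univ : Finset (Fin 3)).finsuppAntidiag d)
    (fun m => algebraMap ℝ K (q.coeff m) * (t ^ m 0 * x ^ m 1 * y ^ m 2))]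
  refine Finset.sum_subset ?_ ?_
  · intro m hm
    apply idx_mem
    rw [← degree_eq]
    by_contra h
    exact (MvPolynomial.mem_support_iff.1 hm) (hq.coeff_eq_zero h)
  · intro m _ hm
    rw [MvPolynomial.notMem_support_iff.1 hm]; simp

theorem ev_cof {q : MvPolynomial (Fin 3) ℝ} (hq : q.IsHomogeneous d) (t x y : ℂ) :
    ev (cof d q) t x y = MvPolynomial.aeval ![t, x, y] q := by
  rw [aeval_homog hq]; rfl

theorem evR_cof {q : MvPolynomial (Fin 3) ℝ} (hq : q.IsHomogeneous d) (t x y : ℝ) :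
    evR (cof d q) t x y = MvPolynomial.eval ![t, x, y] q := by
  have := aeval_homog hq t x y
  rw [← MvPolynomial.coe_aeval_eq_eval]
  exact this.symm

/-- The polynomial with coefficients `c`. -/
noncomputable def toPoly (c : Idx d → ℝ) : MvPolynomial (Fin 3) ℝ :=
  ∑ m : Idx d, MvPolynomial.monomial m.1 (c m)

theorem toPoly_homog (c : Idx d → ℝ) : (toPoly c).IsHomogeneous d := by
  refine MvPolynomial.IsHomogeneous.sum _ _ _ fun m _ => ?_
  apply MvPolynomial.isHomogeneous_monomial
  rw [degree_eq, idx_sum]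

theorem cof_toPoly (c : Idx d → ℝ) : cof d (toPoly c) = c := by
  funext m
  unfold cof toPoly
  rw [MvPolynomial.coeff_sum, Finset.sum_eq_single m]
  · simp
  · intro b _ hb
    rw [MvPolynomial.coeff_monomial, if_neg]
    intro h; exact hb (Subtype.ext h)
  · simp

theorem evR_toPoly (c : Idx d → ℝ) (t x y : ℝ) :
    evR c t x y = MvPolynomial.eval ![t, x, y] (toPoly c) := by
  rw [← evR_cof (toPoly_homog c), cof_toPoly]

theorem ev_toPoly (c : Idx d → ℝ) (t x y : ℂ) :
    ev c t x y = MvPolynomial.aeval ![t, x, y] (toPoly c) := by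
  rw [← ev_cof (toPoly_homog c), cof_toPoly]

theorem evR_inj {c c' : Idx d → ℝ} (h : ∀ t x y : ℝ, evR c t x y = evR c' t x y) : c = c' := by
  rw [← cof_toPoly c, ← cof_toPoly c']
  congr 1
  apply MvPolynomial.funext
  intro v
  have := h (v 0) (v 1) (v 2)
  rw [evR_toPoly, evR_toPoly] at this
  have hv : ![v 0, v 1, v 2] = v := by
    funext i; fin_cases i <;> rfl
  rwa [hv] at this

/-- Evaluation as a linear map to functions. -/
noncomputable def evL (d : ℕ) : (Idx d → ℝ) →ₗ[ℝ] (ℝ × ℝ × ℝ → ℝ) where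
  toFun c := fun v => evR c v.1 v.2.1 v.2.2
  map_add' a b := by
    funext v; simp [evR, add_mul, Finset.sum_add_distrib]
  map_smul' a b := by
    funext v; simp [evR, Finset.mul_sum, mul_assoc]

theorem evR_add (a b : Idx d → ℝ) (t x y : ℝ) : evR (a + b) t x y = evR a t x y + evR b t x y := by
  simp [evR, add_mul, Finset.sum_add_distrib]

theorem evR_smul (r : ℝ) (b : Idx d → ℝ) (t x y : ℝ) : evR (r • b) t x y = r * evR b t x y := by
  simp [evR, Finset.mul_sum, mul_assoc]

theorem evL_emb (d : ℕ) : Topology.IsClosedEmbedding (evL d) := by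
  apply LinearMap.isClosedEmbedding_of_injective
  rw [LinearMap.ker_eq_bot]
  intro a b h
  apply evR_inj
  intro t x y
  exact congrFun h (t, x, y)

theorem tendsto_iff {α : Type*} {l : Filter α} {f : α → Idx d → ℝ} {c : Idx d → ℝ} :
    Filter.Tendsto f l (nhds c) ↔
      ∀ t x y : ℝ, Filter.Tendsto (fun a => evR (f a) t x y) l (nhds (evR c t x y)) := by
  rw [(evL_emb d).isInducing.tendsto_nhds_iff, tendsto_pi_nhds]
  constructor
  · intro h t x y; exact h (t, x, y)
  · intro h v; exact h v.1 v.2.1 v.2.2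

/-- Continuity into the coefficient space can be checked pointwise. -/
theorem continuous_of_ev {α : Type*} [TopologicalSpace α] {f : α → Idx d → ℝ}
    (h : ∀ t x y : ℝ, Continuous fun a => evR (f a) t x y) : Continuous f := by
  rw [continuous_iff_continuousAt]
  intro a
  exact tendsto_iff.2 fun t x y => (h t x y).continuousAt

/-- The real part of a complex homogeneous polynomial. -/
theorem exists_re {q : MvPolynomial (Fin 3) ℂ} (hq : q.IsHomogeneous d) :
    ∃ c : Idx d → ℝ, ∀ t x y : ℝ, evR c t x y =
      (MvPolynomial.eval ![(t : ℂ), x, y] q).re := by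
  refine ⟨fun m => (q.coeff m.1).re, fun t x y => ?_⟩
  rw [MvPolynomial.eval_eq']
  simp only [Fin.prod_univ_three, Matrix.cons_val_zero, Matrix.cons_val_one,
    Matrix.cons_val, Complex.re_sum, evR]
  rw [Finset.sum_coe_sort ((Finset.univ : Finset (Fin 3)).finsuppAntidiag d)
    (fun m => (q.coeff m).re * (t ^ m 0 * x ^ m 1 * y ^ m 2))]
  symm
  refine (Finset.sum_congr rfl fun m _ => ?_).trans (Finset.sum_subset ?_ ?_)
  · rw [← Complex.ofReal_pow, ← Complex.ofReal_pow, ← Complex.ofReal_pow, ← Complex.ofReal_mul,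
      ← Complex.ofReal_mul, Complex.re_mul_ofReal]
  · intro m hm
    apply idx_mem
    rw [← degree_eq]
    by_contra h
    exact (MvPolynomial.mem_support_iff.1 hm) (hq.coeff_eq_zero h)
  · intro m _ hm
    rw [MvPolynomial.notMem_support_iff.1 hm]; simp

theorem continuous_ev : Continuous fun p : (Idx d → ℝ) × ℂ × ℂ × ℂ =>
    ev p.1 p.2.1 p.2.2.1 p.2.2.2 := by
  unfold ev; fun_prop

theorem continuous_evD : Continuous fun p : (Idx d → ℝ) × ℂ × ℂ × ℂ × ℂ =>
    evD p.1 p.2.1 p.2.2.1 p.2.2.2.1 p.2.2.2.2 := by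
  unfold evD; fun_prop

theorem continuous_evR (t x y : ℝ) : Continuous fun c : Idx d → ℝ => evR c t x y := by
  unfold evR; fun_prop

end HV

namespace HV

open Polynomial in
/-- Averaging of a polynomial over a purely imaginary shift. -/
noncomputable def Tsh (a : ℝ) (φ : Polynomial ℂ) : Polynomial ℂ :=
  C (1 / 2) * (φ.comp (X + C (Complex.I * a)) + φ.comp (X - C (Complex.I * a)))

/-- All roots are real (and the polynomial is not zero). -/
def RR (φ : Polynomial ℂ) : Prop := ∀ t : ℂ, φ.eval t = 0 → t.im = 0

theorem RR.ne_zero {φ : Polynomial ℂ} (h : RR φ) : φ ≠ 0 := by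
  rintro rfl
  have := h Complex.I (by simp)
  simp at this

theorem Tsh_eval (a : ℝ) (φ : Polynomial ℂ) (t : ℂ) : (Tsh a φ).eval t =
    1 / 2 * (φ.eval (t + Complex.I * a) + φ.eval (t - Complex.I * a)) := by
  simp [Tsh]

theorem Tsh_deriv (a : ℝ) (φ : Polynomial ℂ) (t : ℂ) : (Tsh a φ).derivative.eval t =
    1 / 2 * (φ.derivative.eval (t + Complex.I * a) + φ.derivative.eval (t - Complex.I * a)) := by
  simp [Tsh, Polynomial.derivative_comp]

theorem Tsh_zero (φ : Polynomial ℂ) : Tsh 0 φ = φ := by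
  apply Polynomial.funext
  intro t
  rw [Tsh_eval]; simp; ring

theorem prod_lt {w1 w2 : ℂ} (h : ∀ r : ℂ, r.im = 0 → ‖w2 - r‖ < ‖w1 - r‖) (m : Multiset ℂ)
    (hm : ∀ r ∈ m, r.im = 0) :
    ‖(m.map (w2 - ·)).prod‖ ≤ ‖(m.map (w1 - ·)).prod‖ ∧ 0 < ‖(m.map (w1 - ·)).prod‖ ∧
      (m = 0 ∨ ‖(m.map (w2 - ·)).prod‖ < ‖(m.map (w1 - ·)).prod‖) := by
  induction m using Multiset.induction_on with
  | empty => simp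
  | cons r m ih =>
    obtain ⟨h1, h2, h3⟩ := ih fun r hr => hm r (Multiset.mem_cons_of_mem hr)
    have h4 := h r (hm r (Multiset.mem_cons_self r m))
    have h5 : ‖((r ::ₘ m).map (w2 - ·)).prod‖ < ‖((r ::ₘ m).map (w1 - ·)).prod‖ := by
      simp only [Multiset.map_cons, Multiset.prod_cons, norm_mul]
      have := norm_nonneg (w2 - r)
      nlinarith [norm_nonneg ((m.map (w2 - ·)).prod)]
    exact ⟨h5.le, (norm_nonneg _).trans_lt h5, Or.inr h5⟩

theorem norm_lt_aux (t r : ℂ) (hr : r.im = 0) (a : ℝ) (h : 0 < a * t.im) :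
    ‖t - Complex.I * a - r‖ < ‖t + Complex.I * a - r‖ := by
  rw [← sq_lt_sq₀ (norm_nonneg _) (norm_nonneg _), Complex.sq_norm, Complex.sq_norm,
    Complex.normSq_apply, Complex.normSq_apply]
  simp [hr]
  nlinarith

theorem RR.eval_lt {φ : Polynomial ℂ} (h : RR φ) {w1 w2 : ℂ}
    (hw : ∀ r : ℂ, r.im = 0 → ‖w2 - r‖ < ‖w1 - r‖) : φ.eval w1 + φ.eval w2 ≠ 0 := by
  have h0 := h.ne_zero
  have hs : φ.Splits := IsAlgClosed.splits φ
  rw [hs.eval_eq_prod_roots, hs.eval_eq_prod_roots, ← mul_add]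
  apply mul_ne_zero (by simpa using h0)
  obtain ⟨h1, h2, h3⟩ := prod_lt hw φ.roots fun r hr => h r (Polynomial.isRoot_of_mem_roots hr)
  rcases h3 with h3 | h3
  · rw [h3]; norm_num
  · intro h4
    rw [add_eq_zero_iff_eq_neg] at h4
    rw [h4, norm_neg] at h3
    exact lt_irrefl _ h3

theorem Tsh_RR (a : ℝ) {φ : Polynomial ℂ} (h : RR φ) : RR (Tsh a φ) := by
  intro t ht
  rw [Tsh_eval] at ht
  replace ht := (mul_eq_zero.1 ht).resolve_left (by norm_num)
  by_contra hi
  rcases lt_trichotomy (a * t.im) 0 with h1 | h1 | h1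
  · rw [add_comm] at ht
    refine h.eval_lt (fun r hr => ?_) ht
    have := norm_lt_aux t r hr (-a) (by linarith)
    push_cast at this
    simpa [sub_eq_add_neg] using this
  · have ha : a = 0 := (mul_eq_zero.1 h1).resolve_right hi
    subst ha
    simp at ht
    exact hi (h t ht)
  · exact h.eval_lt (fun r hr => norm_lt_aux t r hr a h1) ht

theorem sum_im_lt {w : ℂ} (hw : w.im ≠ 0) (m : Multiset ℂ) (hm : ∀ r ∈ m, r.im = 0) :
    (m.map fun r => 1 / (w - r)).sum.im * w.im ≤ 0 ∧
      (m = 0 ∨ (m.map fun r => 1 / (w - r)).sum.im * w.im < 0) := by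
  induction m using Multiset.induction_on with
  | empty => simp
  | cons r m ih =>
    obtain ⟨h1, -⟩ := ih fun r hr => hm r (Multiset.mem_cons_of_mem hr)
    have hr := hm r (Multiset.mem_cons_self r m)
    have h5 : ((r ::ₘ m).map fun r => 1 / (w - r)).sum.im * w.im < 0 := by
      rw [Multiset.map_cons, Multiset.sum_cons, Complex.add_im, add_mul]
      have : (1 / (w - r)).im * w.im < 0 := by
        have hn : 0 < Complex.normSq (w - r) := by
          rw [Complex.normSq_pos]
          intro h
          apply hw
          have := congrArg Complex.im h
          simpa [hr] using this
        rw [one_div, Complex.inv_im, Complex.sub_im, hr, sub_zero, div_mul_eq_mul_div]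
        apply div_neg_of_neg_of_pos _ hn
        have := mul_self_pos.2 hw
        linarith
      linarith
    exact ⟨h5.le, Or.inr h5⟩

theorem Tsh_simple {a : ℝ} (ha : a ≠ 0) {φ : Polynomial ℂ} (h : RR φ) {t : ℂ}
    (ht : (Tsh a φ).eval t = 0) : (Tsh a φ).derivative.eval t ≠ 0 := by
  intro hd
  have hti := Tsh_RR a h t ht
  rw [Tsh_eval] at ht
  rw [Tsh_deriv] at hd
  replace ht := (mul_eq_zero.1 ht).resolve_left (by norm_num)
  replace hd := (mul_eq_zero.1 hd).resolve_left (by norm_num)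
  have i1 : (t + Complex.I * a).im = a := by simp [hti]
  have i2 : (t - Complex.I * a).im = -a := by simp [hti]
  set w1 := t + Complex.I * a
  set w2 := t - Complex.I * a
  have n1 : φ.eval w1 ≠ 0 := fun h0 => ha (by rw [← i1]; exact h _ h0)
  have n2 : φ.eval w2 ≠ 0 := fun h0 => ha (neg_eq_zero.1 (by rw [← i2]; exact h _ h0))
  have hs : φ.Splits := IsAlgClosed.splits φ
  have e1 := hs.eval_derivative_div_eval_of_ne_zero n1
  have e2 := hs.eval_derivative_div_eval_of_ne_zero n2
  have e3 : φ.derivative.eval w1 / φ.eval w1 = φ.derivative.eval w2 / φ.eval w2 := by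
    rw [add_eq_zero_iff_eq_neg] at ht hd
    rw [ht, hd, neg_div_neg_eq]
  rw [e1, e2] at e3
  have hr : ∀ r ∈ φ.roots, r.im = 0 := fun r hr => h r (Polynomial.isRoot_of_mem_roots hr)
  have s1 := (sum_im_lt (w := w1) (by rw [i1]; exact ha) φ.roots hr).2
  have s2 := (sum_im_lt (w := w2) (by rw [i2]; exact neg_ne_zero.2 ha) φ.roots hr).2
  rcases s1 with s1 | s1
  · rw [hs.eval_eq_prod_roots, hs.eval_eq_prod_roots, s1] at ht
    simp at ht
    exact h.ne_zero ht
  · rcases s2 with s2 | s2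
    · rw [s2] at s1; simp at s1
    · rw [e3, i1] at s1
      rw [i2] at s2
      linarith

variable {d : ℕ}

/-- The form as a polynomial in the first variable. -/
noncomputable def evP (c : Idx d → ℝ) (x y : ℂ) : Polynomial ℂ :=
  ∑ m : Idx d, Polynomial.C ((c m : ℂ) * x ^ m.1 1 * y ^ m.1 2) * Polynomial.X ^ m.1 0

theorem evP_eval (c : Idx d → ℝ) (t x y : ℂ) : (evP c x y).eval t = ev c t x y := by
  simp only [evP, ev, Polynomial.eval_finset_sum, Polynomial.eval_mul, Polynomial.eval_C,
    Polynomial.eval_pow, Polynomial.eval_X]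
  exact Finset.sum_congr rfl fun m _ => by ring

theorem evP_deriv (c : Idx d → ℝ) (t x y : ℂ) : (evP c x y).derivative.eval t = evt c t x y := by
  simp only [evP, evt, Polynomial.derivative_sum, Polynomial.eval_finset_sum,
    Polynomial.derivative_mul, Polynomial.derivative_C, Polynomial.derivative_X_pow,
    Polynomial.eval_add, Polynomial.eval_mul, Polynomial.eval_C,
    Polynomial.eval_pow, Polynomial.eval_X, Polynomial.eval_natCast, zero_mul, zero_add,
    Polynomial.eval_zero]
  exact Finset.sum_congr rfl fun m _ => by ring

/-- Hyperbolic forms. -/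
def Hyp (c : Idx d → ℝ) : Prop :=
  0 < evR c 1 0 0 ∧ ∀ (x y : ℝ) (t : ℂ), ev c t x y = 0 → (x ≠ 0 ∨ y ≠ 0) → t.im = 0

/-- Strictly hyperbolic forms. -/
def HypS (c : Idx d → ℝ) : Prop :=
  0 < evR c 1 0 0 ∧ ∀ (u : ℂ) (x y : ℝ), (u ≠ 0 ∨ x ≠ 0 ∨ y ≠ 0) →
    ¬ (ev c u x y = 0 ∧ evD c u (starRingEnd ℂ u) x y = 0)

theorem ev_axis (c : Idx d → ℝ) (u : ℂ) : ev c u 0 0 = u ^ d * (evR c 1 0 0 : ℝ) := by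
  have := ev_smul c u 1 0 0
  rw [mul_one, mul_zero] at this
  rw [this, ← ev_ofReal]; simp

theorem Hyp.RR {c : Idx d → ℝ} (h : Hyp c) (x y : ℝ) : RR (evP c x y) := by
  intro t ht
  rw [evP_eval] at ht
  by_cases hxy : x ≠ 0 ∨ y ≠ 0
  · exact h.2 x y t ht hxy
  · push Not at hxy
    obtain ⟨rfl, rfl⟩ := hxy
    rw [Complex.ofReal_zero, ev_axis] at ht
    have := (mul_eq_zero.1 ht).resolve_right (by exact_mod_cast h.1.ne')
    rw [eq_zero_of_pow_eq_zero this]; simp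

open MvPolynomial in
theorem exists_gam (g : Idx d → ℝ) (s : ℝ) : ∃ c : Idx d → ℝ, ∀ t x y : ℝ, evR c t x y =
    (1 / 2 * (ev g (t + Complex.I * (((1 - s) * x : ℝ) : ℂ) + Complex.I * (((1 - s) * y : ℝ) : ℂ))
        ((s * x : ℝ) : ℂ) ((s * y : ℝ) : ℂ) +
      ev g (t + Complex.I * (((1 - s) * x : ℝ) : ℂ) - Complex.I * (((1 - s) * y : ℝ) : ℂ))
        ((s * x : ℝ) : ℂ) ((s * y : ℝ) : ℂ))).re := by
  let q : ℂ → MvPolynomial (Fin 3) ℂ := fun k =>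
    aeval ![X 0 + C (Complex.I * (1 - s)) * X 1 + C (k * (Complex.I * (1 - s))) * X 2,
      C (s : ℂ) * X 1, C (s : ℂ) * X 2] (toPoly g)
  have hq : ∀ k, (q k).IsHomogeneous d := by
    intro k
    have := (toPoly_homog g).eval₂ (algebraMap ℝ (MvPolynomial (Fin 3) ℂ))
      ![X 0 + C (Complex.I * (1 - s)) * X 1 + C (k * (Complex.I * (1 - s))) * X 2,
      C (s : ℂ) * X 1, C (s : ℂ) * X 2] (n := 1) (fun r => isHomogeneous_C _ (r : ℂ)) (by
        intro i
        fin_cases i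
        · exact ((isHomogeneous_X _ 0).add (isHomogeneous_C_mul_X _ 1)).add
            (isHomogeneous_C_mul_X _ 2)
        · exact isHomogeneous_C_mul_X _ 1
        · exact isHomogeneous_C_mul_X _ 2)
    rwa [one_mul] at this
  have he : ∀ k t x y : ℂ, MvPolynomial.eval ![t, x, y] (q k) =
      ev g (t + Complex.I * (1 - s) * x + k * (Complex.I * (1 - s)) * y) (s * x) (s * y) := by
    intro k t x y
    rw [ev_toPoly, ← MvPolynomial.coe_aeval_eq_eval]
    have := congrArg (fun h => h (toPoly g))
      (MvPolynomial.comp_aeval (R := ℝ) (φ := ((aeval ![t, x, y] : MvPolynomial (Fin 3) ℂ →ₐ[ℂ] ℂ).restrictScalars ℝ)) (f := ![X 0 + C (Complex.I * (1 - s)) * X 1 + C (k * (Complex.I * (1 - s))) * X 2,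
      C (s : ℂ) * X 1, C (s : ℂ) * X 2]))
    refine Eq.trans this ?_
    congr 2
    ext i
    fin_cases i <;> simp
  have hh : (C (1 / 2 : ℂ) * (q 1 + q (-1))).IsHomogeneous d := by
    have := (isHomogeneous_C (Fin 3) (1 / 2 : ℂ)).mul ((hq 1).add (hq (-1)))
    rwa [zero_add] at this
  obtain ⟨c, hc⟩ := exists_re hh
  refine ⟨c, fun t x y => ?_⟩
  rw [hc]
  congr 1
  rw [map_mul, map_add, eval_C, he, he]
  push_cast
  congr 3 <;> ring

/-- The straightening path. -/
noncomputable def gam (g : Idx d → ℝ) (s : ℝ) : Idx d → ℝ := Classical.choose (exists_gam g s)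

theorem gam_spec (g : Idx d → ℝ) (s : ℝ) (x y : ℝ) :
    evP (gam g s) x y = Tsh ((1 - s) * x) (Tsh ((1 - s) * y) (evP g ((s * x : ℝ) : ℂ) ((s * y : ℝ) : ℂ))) := by
  apply Polynomial.eq_of_infinite_eval_eq
  apply Set.infinite_of_injective_forall_mem Complex.ofReal_injective
  intro t
  simp only [Set.mem_setOf_eq]
  rw [evP_eval, ev_ofReal, gam, Classical.choose_spec (exists_gam g s) t x y]
  simp only [Tsh_eval, evP_eval]
  have e1 : (t : ℂ) - Complex.I * (((1 - s) * x : ℝ) : ℂ) - Complex.I * (((1 - s) * y : ℝ) : ℂ) =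
      starRingEnd ℂ (t + Complex.I * (((1 - s) * x : ℝ) : ℂ) + Complex.I * (((1 - s) * y : ℝ) : ℂ)) := by
    simp only [map_add, map_mul, Complex.conj_ofReal, Complex.conj_I]; ring
  have e2 : (t : ℂ) - Complex.I * (((1 - s) * x : ℝ) : ℂ) + Complex.I * (((1 - s) * y : ℝ) : ℂ) =
      starRingEnd ℂ (t + Complex.I * (((1 - s) * x : ℝ) : ℂ) - Complex.I * (((1 - s) * y : ℝ) : ℂ)) := by
    simp only [map_add, map_sub, map_mul, Complex.conj_ofReal, Complex.conj_I]; ring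
  rw [e1, e2, ← Complex.conj_ofReal (s * x), ← Complex.conj_ofReal (s * y)]
  rw [ev_conj, ev_conj, Complex.conj_ofReal, Complex.conj_ofReal]
  apply Complex.ext <;> simp <;> ring

theorem gam_ev (g : Idx d → ℝ) (s : ℝ) (t : ℂ) (x y : ℝ) :
    ev (gam g s) t x y = (Tsh ((1 - s) * x) (Tsh ((1 - s) * y)
      (evP g ((s * x : ℝ) : ℂ) ((s * y : ℝ) : ℂ)))).eval t := by
  rw [← gam_spec, evP_eval]

theorem gam_one (g : Idx d → ℝ) : gam g 1 = g := by
  apply evR_inj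
  intro t x y
  apply Complex.ofReal_injective
  rw [← ev_ofReal, ← ev_ofReal, gam_ev]
  simp [Tsh_zero, evP_eval]

theorem gam_lead (g : Idx d → ℝ) (s : ℝ) : evR (gam g s) 1 0 0 = evR g 1 0 0 := by
  apply Complex.ofReal_injective
  rw [← ev_ofReal, ← ev_ofReal, gam_ev]
  simp [Tsh_zero, evP_eval]

theorem gam_zero {g g' : Idx d → ℝ} (h : evR g 1 0 0 = evR g' 1 0 0) : gam g 0 = gam g' 0 := by
  apply evR_inj
  intro t x y
  apply Complex.ofReal_injective
  rw [← ev_ofReal, ← ev_ofReal, gam_ev, gam_ev]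
  have : evP g ((0 * x : ℝ) : ℂ) ((0 * y : ℝ) : ℂ) = evP g' ((0 * x : ℝ) : ℂ) ((0 * y : ℝ) : ℂ) := by
    apply Polynomial.funext
    intro u
    rw [evP_eval, evP_eval]
    simp only [zero_mul, Complex.ofReal_zero, ev_axis, h]
  rw [this]

theorem gam_cont (g : Idx d → ℝ) : Continuous (gam g) := by
  apply continuous_of_ev
  intro t x y
  have : (fun s => evR (gam g s) t x y) = fun s => (ev (gam g s) t x y).re := by
    ext s; rw [ev_ofReal]; simp
  rw [this]
  simp only [gam_ev, Tsh_eval, evP_eval]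
  unfold ev
  fun_prop

theorem gam_hyp {g : Idx d → ℝ} (h : Hyp g) {s : ℝ} (hs : s ≠ 1) : HypS (gam g s) := by
  refine ⟨by rw [gam_lead]; exact h.1, ?_⟩
  rintro u x y hu ⟨h1, h2⟩
  have hs' : 1 - s ≠ 0 := sub_ne_zero.2 (Ne.symm hs)
  have hR := h.RR (s * x) (s * y)
  by_cases hx : x = 0
  · subst hx
    by_cases hy : y = 0
    · subst hy
      have hu0 : u ≠ 0 := by tauto
      rw [Complex.ofReal_zero, ev_axis, gam_lead] at h1
      have := h.1.ne'
      exact mul_ne_zero (pow_ne_zero _ hu0) (by exact_mod_cast this) h1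
    · rw [gam_ev, mul_zero, Tsh_zero] at h1
      have hi := Tsh_RR _ hR u (by simpa using h1)
      rw [Complex.conj_eq_iff_im.2 hi, evD_self, ← evP_deriv, gam_spec, mul_zero, Tsh_zero] at h2
      exact Tsh_simple (mul_ne_zero hs' hy) hR (by simpa using h1) (by simpa using h2)
  · rw [gam_ev] at h1
    have hi := Tsh_RR _ (Tsh_RR _ hR) u h1
    rw [Complex.conj_eq_iff_im.2 hi, evD_self, ← evP_deriv, gam_spec] at h2
    exact Tsh_simple (mul_ne_zero hs' hx) (Tsh_RR _ hR) h1 h2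

theorem HypS.real {c : Idx d → ℝ} (h : HypS c) {u : ℂ} {x y : ℝ} (hxy : x ≠ 0 ∨ y ≠ 0)
    (h0 : ev c u x y = 0) : u.im = 0 ∧ evt c u x y ≠ 0 := by
  have h1 : u.im = 0 := by
    by_contra hi
    apply h.2 u x y (Or.inr hxy)
    refine ⟨h0, ?_⟩
    have e := evD_mul c u (starRingEnd ℂ u) x y
    have e2 : ev c (starRingEnd ℂ u) x y = 0 := by
      have := ev_conj c u x y
      rw [Complex.conj_ofReal, Complex.conj_ofReal, h0, map_zero] at this
      exact this
    rw [h0, e2, sub_zero] at e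
    refine (mul_eq_zero.1 e).resolve_left ?_
    rw [sub_eq_zero]
    intro h3
    exact hi (Complex.conj_eq_iff_im.1 h3.symm)
  refine ⟨h1, fun h2 => h.2 u x y (Or.inr hxy) ⟨h0, ?_⟩⟩
  rw [Complex.conj_eq_iff_im.2 h1, evD_self]; exact h2

theorem HypS.hyp {c : Idx d → ℝ} (h : HypS c) : Hyp c :=
  ⟨h.1, fun _ _ _ h0 hxy => (h.real hxy h0).1⟩

theorem HypS_open : IsOpen {c : Idx d → ℝ | HypS c} := by
  let K : Set (ℂ × ℝ × ℝ) := Metric.sphere 0 1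
  have hK : IsCompact K := isCompact_sphere 0 1
  have heq : {c : Idx d → ℝ | HypS c} = {c | 0 < evR c 1 0 0} ∩ {c | ∀ p ∈ K,
      ¬ (ev c p.1 p.2.1 p.2.2 = 0 ∧ evD c p.1 (starRingEnd ℂ p.1) p.2.1 p.2.2 = 0)} := by
    ext c
    refine ⟨fun h => ⟨h.1, fun p hp => h.2 _ _ _ ?_⟩, fun h => ⟨h.1, fun u x y hu h0 => ?_⟩⟩
    · by_contra hc
      push Not at hc
      have : p = 0 := Prod.ext hc.1 (Prod.ext hc.2.1 hc.2.2)
      rw [this] at hp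
      simp [K] at hp
    · set p : ℂ × ℝ × ℝ := (u, x, y) with hp
      have hp0 : p ≠ 0 := by
        intro h; rw [hp, Prod.mk_eq_zero, Prod.mk_eq_zero] at h; tauto
      have hn : ‖p‖ ≠ 0 := norm_ne_zero_iff.2 hp0
      refine h.2 (‖p‖⁻¹ • p) ?_ ?_
      · simp [K, norm_smul, hn]
      · have e1 := ev_smul c ((‖p‖⁻¹ : ℝ) : ℂ) u x y
        have e2 := evD_smul c ((‖p‖⁻¹ : ℝ) : ℂ) u (starRingEnd ℂ u) x y
        rw [h0.1, mul_zero] at e1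
        rw [h0.2, mul_zero] at e2
        have e3 := (mul_eq_zero.1 e2).resolve_right (by exact_mod_cast inv_ne_zero hn)
        constructor
        · rw [← e1]; simp [hp]
        · rw [← e3]; simp [hp]
  rw [heq]
  refine (isOpen_lt continuous_const (continuous_evR 1 0 0)).inter ?_
  rw [isOpen_iff_mem_nhds]
  intro c hc
  refine hK.eventually_forall_of_forall_eventually fun p hp => ?_
  have hcl : IsClosed {q : (Idx d → ℝ) × (ℂ × ℝ × ℝ) | ev q.1 q.2.1 q.2.2.1 q.2.2.2 = 0 ∧
      evD q.1 q.2.1 (starRingEnd ℂ q.2.1) q.2.2.1 q.2.2.2 = 0} := by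
    refine IsClosed.inter (isClosed_eq ?_ continuous_const) (isClosed_eq ?_ continuous_const)
    · unfold ev; fun_prop
    · unfold evD
      have := Complex.continuous_conj
      fun_prop
  exact hcl.isOpen_compl.mem_nhds (hc p hp)

end HV

namespace HV

open Filter Topology

theorem pencil {V W : Type*} [NormedAddCommGroup V] [NormedSpace ℂ V] [FiniteDimensional ℂ V]
    [NormedAddCommGroup W] [NormedSpace ℂ W] [FiniteDimensional ℂ W] (P Q : V →L[ℂ] W)
    (hinj : ∀ z : ℂ, Function.Injective (P + z • Q)) (hQ : Function.Injective Q) (S : W)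
    (hS : ∀ z : ℂ, ∃ g, (P + z • Q) g = S) : S = 0 := by
  choose G hG using hS
  have : CompleteSpace V := FiniteDimensional.complete ℂ V
  have hdiff : Differentiable ℂ G := by
    intro z0
    obtain ⟨L, hL⟩ := LinearMap.exists_leftInverse_of_injective
      ((P + z0 • Q : V →L[ℂ] W) : V →ₗ[ℂ] W) (LinearMap.ker_eq_bot.2 (hinj z0))
    have hL' : ∀ g, L ((P + z0 • Q) g) = g := fun g => LinearMap.congr_fun hL g
    set R : V →L[ℂ] V := (LinearMap.toContinuousLinearMap L).comp Q with hR
    have key : ∀ z, ((1 : V →L[ℂ] V) + (z - z0) • R) (G z) = L S := by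
      intro z
      have h1 := hL' (G z)
      have h2 : L ((P + z • Q) (G z)) = L S := by rw [hG]
      simp only [ContinuousLinearMap.add_apply, ContinuousLinearMap.smul_apply, map_add,
        map_smul] at h1 h2
      simp only [hR, ContinuousLinearMap.add_apply, ContinuousLinearMap.smul_apply,
        ContinuousLinearMap.one_apply, ContinuousLinearMap.comp_apply,
        LinearMap.coe_toContinuousLinearMap']
      rw [← h2, sub_smul]
      nth_rewrite 1 [← h1]
      abel
    have hcont : DifferentiableAt ℂ (fun z : ℂ => (1 : V →L[ℂ] V) + (z - z0) • R) z0 := by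
      fun_prop
    have hval : (fun z : ℂ => (1 : V →L[ℂ] V) + (z - z0) • R) z0 = 1 := by simp
    have hinv : DifferentiableAt ℂ
        (fun z : ℂ => Ring.inverse ((1 : V →L[ℂ] V) + (z - z0) • R)) z0 := by
      have h1 : DifferentiableAt ℂ (Ring.inverse : (V →L[ℂ] V) → (V →L[ℂ] V))
          ((fun z : ℂ => (1 : V →L[ℂ] V) + (z - z0) • R) z0) := by
        rw [hval]
        exact differentiableAt_inverse isUnit_one
      exact h1.comp z0 hcont
    have hunit : ∀ᶠ z in 𝓝 z0, IsUnit ((1 : V →L[ℂ] V) + (z - z0) • R) := by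
      have : {x : V →L[ℂ] V | IsUnit x} ∈
          𝓝 ((fun z : ℂ => (1 : V →L[ℂ] V) + (z - z0) • R) z0) := by
        rw [hval]
        exact Units.isOpen.mem_nhds isUnit_one
      exact hcont.continuousAt this
    have heq : G =ᶠ[𝓝 z0] fun z => Ring.inverse ((1 : V →L[ℂ] V) + (z - z0) • R) (L S) := by
      filter_upwards [hunit] with z hz
      rw [← key z, ← ContinuousLinearMap.mul_apply, Ring.inverse_mul_cancel _ hz]
      rfl
    refine DifferentiableAt.congr_of_eventuallyEq ?_ heq
    exact hinv.clm_apply (differentiableAt_const _)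
  have hlim : Tendsto G (cocompact ℂ) (𝓝 0) := by
    obtain ⟨K, hK0, hK⟩ := LinearMap.exists_antilipschitzWith (Q : V →ₗ[ℂ] W)
      (LinearMap.ker_eq_bot.2 hQ)
    have hK' : ∀ g, ‖g‖ ≤ K * ‖Q g‖ := by
      intro g
      have := hK.le_mul_dist g 0
      simpa using this
    have hb : ∀ z : ℂ, (‖z‖ - K * ‖P‖) * ‖G z‖ ≤ K * ‖S‖ := by
      intro z
      have h1 : z • Q (G z) = S - P (G z) := by
        rw [← hG z]; simp
      have h2 : ‖z‖ * ‖Q (G z)‖ ≤ ‖S‖ + ‖P‖ * ‖G z‖ := by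
        rw [← norm_smul, h1]
        exact (norm_sub_le _ _).trans (by gcongr; exact P.le_opNorm _)
      have h3 := mul_le_mul_of_nonneg_left (hK' (G z)) (norm_nonneg z)
      have h4 := mul_le_mul_of_nonneg_left h2 K.2
      simp only [NNReal.val_eq_coe] at h4
      nlinarith
    have ht : Tendsto (fun z : ℂ => K * ‖S‖ / (‖z‖ - K * ‖P‖)) (cocompact ℂ) (𝓝 0) := by
      apply Tendsto.div_atTop tendsto_const_nhds
      exact tendsto_atTop_add_const_right _ (-(K * ‖P‖)) (tendsto_norm_cocompact_atTop)
    refine squeeze_zero_norm' ?_ ht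
    have := (tendsto_norm_cocompact_atTop (E := ℂ)).eventually (eventually_gt_atTop (K * ‖P‖))
    filter_upwards [this] with z hz
    rw [le_div_iff₀ (by linarith)]
    have := hb z
    linarith
  have h0 := hdiff.apply_eq_of_tendsto_cocompact 0 hlim
  rw [← hG 0, h0, map_zero]

open Matrix

variable {d : ℕ}

/-- The kernel of `M` is at most one-dimensional. -/
def Ker1 (M : Matrix (Fin d) (Fin d) ℂ) : Prop :=
  ∀ v w : Fin d → ℂ, M *ᵥ v = 0 → M *ᵥ w = 0 → v ≠ 0 → ∃ a : ℂ, w = a • v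

theorem exists_cyclic (X : Matrix (Fin d) (Fin d) ℂ) (hX : Xᵀ = X)
    (hk : ∀ t : ℂ, Ker1 (t • 1 + X)) :
    ∃ v : Fin d → ℂ, ∀ w, ∃ q : Polynomial ℂ, w = (Polynomial.aeval X q) *ᵥ v := by
  classical
  set T : Finset ℂ := (charpoly (-X)).roots.toFinset with hT
  have hTmem : ∀ (t : ℂ) (u : Fin d → ℂ), u ≠ 0 → (t • 1 + X) *ᵥ u = 0 → t ∈ T := by
    intro t u hu h
    rw [hT, Multiset.mem_toFinset, Polynomial.mem_roots (charpoly_monic _).ne_zero,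
      Polynomial.IsRoot, eval_charpoly]
    apply Matrix.exists_mulVec_eq_zero_iff.1
    refine ⟨u, hu, ?_⟩
    rw [← h]; congr 1
    rw [sub_neg_eq_add, Matrix.smul_one_eq_diagonal]; rfl
  let u : ℂ → Fin d → ℂ := fun t =>
    if h : ∃ u : Fin d → ℂ, u ≠ 0 ∧ (t • 1 + X) *ᵥ u = 0 then h.choose else 0
  have hu : ∀ t, (∃ u : Fin d → ℂ, u ≠ 0 ∧ (t • 1 + X) *ᵥ u = 0) →
      u t ≠ 0 ∧ (t • 1 + X) *ᵥ u t = 0 := by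
    intro t h
    simp only [u, dif_pos h]
    exact h.choose_spec
  let lin : (Fin d → ℂ) → ((Fin d → ℂ) →ₗ[ℂ] ℂ) := fun a => dotProductBilin ℂ ℂ a
  let s : Finset (Subspace ℂ (Fin d → ℂ)) :=
    (T.filter fun t => ∃ u : Fin d → ℂ, u ≠ 0 ∧ (t • 1 + X) *ᵥ u = 0).image
      fun t => LinearMap.ker (lin (u t))
  have hs : ⊤ ∉ s := by
    intro h
    obtain ⟨t, ht, h2⟩ := Finset.mem_image.1 h
    have ht' := (Finset.mem_filter.1 ht).2
    apply (hu t ht').1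
    rw [LinearMap.ker_eq_top] at h2
    funext i
    have := LinearMap.congr_fun h2 (Pi.single i 1)
    simpa [lin] using this
  have hne := Subspace.biUnion_ne_univ_of_top_notMem hs
  obtain ⟨v, hv⟩ := (Set.ne_univ_iff_exists_notMem _).1 hne
  refine ⟨v, ?_⟩
  by_contra hcon
  push Not at hcon
  obtain ⟨w, hw⟩ := hcon
  let ψ : Polynomial ℂ →ₗ[ℂ] (Fin d → ℂ) :=
    { toFun := fun q => (Polynomial.aeval X q) *ᵥ v
      map_add' := by intro a b; simp [Matrix.add_mulVec]
      map_smul' := by intro a b; simp [Matrix.smul_mulVec] }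
  have hwr : w ∉ LinearMap.range ψ := by
    rintro ⟨q, hq⟩
    exact hw q hq.symm
  obtain ⟨φ, hφw, hφ⟩ := Submodule.exists_le_ker_of_notMem hwr
  let U : Submodule ℂ (Fin d → ℂ) :=
    { carrier := {a | ∀ q : Polynomial ℂ, a ⬝ᵥ ((Polynomial.aeval X q) *ᵥ v) = 0}
      add_mem' := by intro a b ha hb q; rw [add_dotProduct, ha q, hb q, add_zero]
      zero_mem' := by intro q; simp
      smul_mem' := by intro r a ha q; rw [smul_dotProduct, ha q, smul_zero] }
  have hUX : ∀ a ∈ U, (Matrix.toLin' X) a ∈ U := by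
    intro a ha q
    have := ha (Polynomial.X * q)
    rw [map_mul, Polynomial.aeval_X, ← Matrix.mulVec_mulVec, Matrix.dotProduct_mulVec,
      ← Matrix.mulVec_transpose, hX] at this
    simpa using this
  let a0 : Fin d → ℂ := fun i => φ (Pi.single i 1)
  have ha0 : ∀ b, a0 ⬝ᵥ b = φ b := by
    intro b
    conv_rhs => rw [LinearMap.pi_apply_eq_sum_univ φ b]
    simp only [dotProduct, a0, smul_eq_mul]
    refine Finset.sum_congr rfl fun i _ => ?_
    rw [mul_comm]; congr 2
    funext j; simp [Pi.single_apply, eq_comm]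
  have ha0U : a0 ∈ U := by
    intro q
    rw [ha0]
    exact hφ ⟨q, rfl⟩
  have hnt : Nontrivial U := by
    refine ⟨⟨a0, ha0U⟩, 0, ?_⟩
    intro h
    have h' : a0 = 0 := congrArg Subtype.val h
    apply hφw
    rw [← ha0, h', zero_dotProduct]
  obtain ⟨μ, hμ⟩ := Module.End.exists_eigenvalue ((Matrix.toLin' X).restrict hUX)
  obtain ⟨b, hb⟩ := hμ.exists_hasEigenvector
  have hb0 : (b : Fin d → ℂ) ≠ 0 := fun h => hb.2 (Subtype.ext h)
  have hbX : X *ᵥ (b : Fin d → ℂ) = μ • (b : Fin d → ℂ) := by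
    have := congrArg Subtype.val hb.apply_eq_smul
    simpa using this
  have hbk : ((-μ) • (1 : Matrix (Fin d) (Fin d) ℂ) + X) *ᵥ (b : Fin d → ℂ) = 0 := by
    rw [Matrix.add_mulVec, Matrix.smul_mulVec, Matrix.one_mulVec, hbX]; simp
  have hex : ∃ u : Fin d → ℂ, u ≠ 0 ∧ ((-μ) • (1 : Matrix (Fin d) (Fin d) ℂ) + X) *ᵥ u = 0 :=
    ⟨b, hb0, hbk⟩
  obtain ⟨hu1, hu2⟩ := hu _ hex
  obtain ⟨a, ha⟩ := hk (-μ) _ _ hbk hu2 hb0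
  apply hv
  refine Set.mem_iUnion₂.2 ⟨LinearMap.ker (lin (u (-μ))), ?_, ?_⟩
  · exact Finset.mem_image.2 ⟨-μ, Finset.mem_filter.2 ⟨hTmem _ _ hb0 hbk, hex⟩, rfl⟩
  · have := b.2 1
    simp only [map_one, Matrix.one_mulVec] at this
    simp only [SetLike.mem_coe, LinearMap.mem_ker, lin, dotProductBilin_apply_apply]
    rw [ha, smul_dotProduct, this, smul_zero]

theorem centralizer_poly (X : Matrix (Fin d) (Fin d) ℂ) (hX : Xᵀ = X)
    (hk : ∀ t : ℂ, Ker1 (t • 1 + X)) (K : Matrix (Fin d) (Fin d) ℂ) (hK : X * K = K * X) :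
    ∃ q : Polynomial ℂ, K = Polynomial.aeval X q := by
  obtain ⟨v, hv⟩ := exists_cyclic X hX hk
  obtain ⟨q, hq⟩ := hv (K *ᵥ v)
  have hcomm : ∀ r : Polynomial ℂ, K * Polynomial.aeval X r = Polynomial.aeval X r * K := by
    intro r
    induction r using Polynomial.induction_on' with
    | add a b ha hb => rw [map_add, mul_add, ha, hb, add_mul]
    | monomial n a =>
      rw [Polynomial.aeval_monomial, ← mul_assoc, ← Algebra.commutes a K, mul_assoc, mul_assoc]
      congr 1
      exact ((show Commute K X from hK.symm).pow_right n)
  refine ⟨q, ?_⟩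
  apply Matrix.ext_of_mulVec_single
  intro i
  obtain ⟨r, hr⟩ := hv (Pi.single i 1)
  rw [hr, Matrix.mulVec_mulVec, hcomm, ← Matrix.mulVec_mulVec, hq, Matrix.mulVec_mulVec,
    Matrix.mulVec_mulVec, ← map_mul, ← map_mul, mul_comm]

theorem aeval_symm (X : Matrix (Fin d) (Fin d) ℂ) (hX : Xᵀ = X) (q : Polynomial ℂ) :
    (Polynomial.aeval X q)ᵀ = Polynomial.aeval X q := by
  rw [Polynomial.aeval_eq_sum_range, Matrix.transpose_sum]
  refine Finset.sum_congr rfl fun i _ => ?_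
  rw [Matrix.transpose_smul, Matrix.transpose_pow, hX]

theorem skew_comm_zero (X : Matrix (Fin d) (Fin d) ℂ) (hX : Xᵀ = X)
    (hk : ∀ t : ℂ, Ker1 (t • 1 + X)) (K : Matrix (Fin d) (Fin d) ℂ) (hK : X * K = K * X)
    (hs : Kᵀ = -K) : K = 0 := by
  obtain ⟨q, hq⟩ := centralizer_poly X hX hk K hK
  have := aeval_symm X hX q
  rw [← hq, hs] at this
  ext i j
  have := congrFun (congrFun this i) j
  simp only [Matrix.neg_apply] at this
  have h2 : (2 : ℂ) * K i j = 0 := by linear_combination -this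
  simpa using h2

theorem exists_skew (X : Matrix (Fin d) (Fin d) ℂ) (hX : Xᵀ = X)
    (hk : ∀ t : ℂ, Ker1 (t • 1 + X)) (S : Matrix (Fin d) (Fin d) ℂ) (hS : Sᵀ = S)
    (htr : ∀ k : ℕ, (S * X ^ k).trace = 0) :
    ∃ G : Matrix (Fin d) (Fin d) ℂ, Gᵀ = -G ∧ X * G - G * X = S := by
  let ad : Matrix (Fin d) (Fin d) ℂ →ₗ[ℂ] Matrix (Fin d) (Fin d) ℂ :=
    LinearMap.mulLeft ℂ X - LinearMap.mulRight ℂ X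
  have had : ∀ G, ad G = X * G - G * X := fun G => rfl
  have hmem : S ∈ LinearMap.range ad := by
    by_contra hcon
    obtain ⟨φ, hφS, hφ⟩ := Submodule.exists_le_ker_of_notMem hcon
    let K : Matrix (Fin d) (Fin d) ℂ := Matrix.of fun i j => φ (Matrix.single j i 1)
    have hφK : ∀ G, φ G = (K * G).trace := by
      intro G
      conv_lhs => rw [Matrix.matrix_eq_sum_single G]
      simp only [map_sum, Matrix.trace, Matrix.diag, Matrix.mul_apply]
      rw [Finset.sum_comm]
      refine Finset.sum_congr rfl fun i _ => Finset.sum_congr rfl fun j _ => ?_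
      have : Matrix.single j i (G j i) = G j i • Matrix.single j i (1 : ℂ) := by
        rw [Matrix.smul_single, smul_eq_mul, mul_one]
      rw [this, map_smul, smul_eq_mul, mul_comm]; rfl
    have hcomm : X * K = K * X := by
      have h1 : ∀ G, ((K * X - X * K) * G).trace = 0 := by
        intro G
        have h2 : φ (ad G) = 0 := hφ ⟨G, rfl⟩
        rw [hφK, had, mul_sub, Matrix.trace_sub, ← mul_assoc] at h2
        rw [sub_mul, Matrix.trace_sub, ← h2]
        congr 1
        rw [mul_assoc X K G, Matrix.trace_mul_comm X, mul_assoc]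
      have h3 : K * X - X * K = 0 := by
        ext i j
        have := h1 (Matrix.single j i 1)
        rw [Matrix.trace_mul_single] at this
        simpa using this
      exact (sub_eq_zero.1 h3).symm
    obtain ⟨q, hq⟩ := centralizer_poly X hX hk K hcomm
    apply hφS
    rw [hφK, hq, Matrix.trace_mul_comm, Polynomial.aeval_eq_sum_range, Finset.mul_sum,
      Matrix.trace_sum]
    refine Finset.sum_eq_zero fun i _ => ?_
    rw [Matrix.mul_smul, Matrix.trace_smul, htr, smul_zero]
  obtain ⟨G, hG⟩ := hmem
  rw [had] at hG
  refine ⟨(1 / 2 : ℂ) • (G - Gᵀ), ?_, ?_⟩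
  · rw [Matrix.transpose_smul, Matrix.transpose_sub, Matrix.transpose_transpose, ← smul_neg,
      neg_sub]
  · have hT : Gᵀ * X - X * Gᵀ = S := by
      have := congrArg Matrix.transpose hG
      rw [Matrix.transpose_sub, Matrix.transpose_mul, Matrix.transpose_mul, hX, hS] at this
      exact this
    rw [Matrix.mul_smul, Matrix.smul_mul, ← smul_sub]
    have : X * (G - Gᵀ) - (G - Gᵀ) * X = (2 : ℂ) • S := by
      rw [two_smul]
      nth_rewrite 1 [← hG]
      nth_rewrite 1 [← hT]
      rw [mul_sub, sub_mul]; abel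
    rw [this, smul_smul]; norm_num

/-- All members of the pencil have one-dimensional eigenspaces. -/
def PencilK (A B : Matrix (Fin d) (Fin d) ℂ) : Prop :=
  ∀ t x y : ℂ, (x ≠ 0 ∨ y ≠ 0) → Ker1 (t • (1 : Matrix (Fin d) (Fin d) ℂ) + x • A + y • B)

theorem trace_pow_zero (X S : Matrix (Fin d) (Fin d) ℂ)
    (h : ∀ s : ℂ, (S * adjugate (1 + s • X)).trace = 0) (k : ℕ) : (S * X ^ k).trace = 0 := by
  have key : ∀ k : ℕ, ∀ s : ℂ, (S * X ^ k * adjugate (1 + s • X)).trace = 0 := by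
    intro k
    induction k with
    | zero => intro s; simpa using h s
    | succ k ih =>
      have h0 : (S * X ^ k).trace = 0 := by simpa using ih 0
      have h1 : ∀ s : ℂ, s ≠ 0 → (S * X ^ (k + 1) * adjugate (1 + s • X)).trace = 0 := by
        intro s hs
        have h2 := Matrix.mul_adjugate (1 + s • X)
        have h3 : s • (X * adjugate (1 + s • X)) =
            (1 + s • X).det • (1 : Matrix (Fin d) (Fin d) ℂ) - adjugate (1 + s • X) := by
          rw [← h2, add_mul, one_mul, Matrix.smul_mul]; abel
        have h4 : s * (S * X ^ (k + 1) * adjugate (1 + s • X)).trace = 0 := by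
          rw [← smul_eq_mul, ← Matrix.trace_smul, pow_succ, ← mul_assoc, mul_assoc (S * X ^ k),
            ← Matrix.mul_smul, h3, mul_sub, Matrix.trace_sub, ih, Matrix.mul_smul, mul_one,
            Matrix.trace_smul, h0]
          simp
        exact (mul_eq_zero.1 h4).resolve_left hs
      have hc : Continuous fun s : ℂ => (S * X ^ (k + 1) * adjugate (1 + s • X)).trace := by
        fun_prop
      have hd : Dense {s : ℂ | s ≠ 0} := dense_compl_singleton 0
      have := Continuous.ext_on hd hc continuous_const (fun s hs => h1 s hs)
      exact fun s => congrFun this s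
  simpa using key k 0

theorem sym_zero (A B : Matrix (Fin d) (Fin d) ℂ) (hA : Aᵀ = A) (hB : Bᵀ = B)
    (hK : PencilK A B) (S : Matrix (Fin d) (Fin d) ℂ) (hS : Sᵀ = S)
    (h : ∀ t x y : ℂ, (S * adjugate (t • 1 + x • A + y • B)).trace = 0) : S = 0 := by
  have hX : ∀ x y : ℂ, (x • A + y • B)ᵀ = x • A + y • B := by
    intro x y; rw [Matrix.transpose_add, Matrix.transpose_smul, Matrix.transpose_smul, hA, hB]
  have hk : ∀ x y : ℂ, (x ≠ 0 ∨ y ≠ 0) → ∀ t : ℂ, Ker1 (t • 1 + (x • A + y • B)) := by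
    intro x y hxy t
    rw [← add_assoc]; exact hK t x y hxy
  have htr : ∀ x y : ℂ, ∀ k : ℕ, (S * (x • A + y • B) ^ k).trace = 0 := by
    intro x y k
    apply trace_pow_zero
    intro s
    have := h 1 (s * x) (s * y)
    rw [one_smul, mul_smul, mul_smul, add_assoc, ← smul_add] at this
    exact this
  let V : Submodule ℂ (Fin d → Fin d → ℂ) :=
    { carrier := {K | ∀ i j, K j i = - K i j}
      add_mem' := by intro a b ha hb i j; simp [ha i j, hb i j]; ring
      zero_mem' := by intro i j; simp
      smul_mem' := by intro r a ha i j; simp [ha i j] }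
  let ad : Matrix (Fin d) (Fin d) ℂ → (V →ₗ[ℂ] (Fin d → Fin d → ℂ)) := fun X =>
    ((LinearMap.mulLeft ℂ X - LinearMap.mulRight ℂ X :
      Matrix (Fin d) (Fin d) ℂ →ₗ[ℂ] Matrix (Fin d) (Fin d) ℂ)).comp V.subtype
  let toM : V → Matrix (Fin d) (Fin d) ℂ := fun G => G.1
  have had : ∀ X (G : V), ad X G = X * toM G -
      toM G * X := fun X G => rfl
  have hsum : ∀ (z : ℂ) (G : V), (LinearMap.toContinuousLinearMap (ad A) +
      z • LinearMap.toContinuousLinearMap (ad B)) G = ad (A + z • B) G := by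
    intro z G
    simp only [ContinuousLinearMap.add_apply, ContinuousLinearMap.smul_apply,
      LinearMap.coe_toContinuousLinearMap']
    rw [had, had, had]
    change _ = (A + z • B) * toM G - _
    rw [add_mul, mul_add, Matrix.smul_mul, Matrix.mul_smul]
    change (A * toM G - toM G * A) +
      z • (B * toM G - toM G * B) = _
    rw [smul_sub]; abel
  have hinj : ∀ x y : ℂ, (x ≠ 0 ∨ y ≠ 0) → ∀ G : V, ad (x • A + y • B) G = 0 → G = 0 := by
    intro x y hxy G hG
    rw [had] at hG
    apply Subtype.ext
    exact skew_comm_zero _ (hX x y) (hk x y hxy) G.1 (sub_eq_zero.1 hG)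
      (by ext i j; exact G.2 i j)
  refine pencil (V := V) (W := Fin d → Fin d → ℂ) (LinearMap.toContinuousLinearMap (ad A))
    (LinearMap.toContinuousLinearMap (ad B)) ?_ ?_ S ?_
  · intro z
    rw [injective_iff_map_eq_zero]
    intro G hG
    rw [hsum] at hG
    apply hinj 1 z (Or.inl one_ne_zero) G
    rwa [one_smul]
  · rw [injective_iff_map_eq_zero]
    intro G hG
    apply hinj 0 1 (Or.inr one_ne_zero) G
    rw [zero_smul, one_smul, zero_add]
    exact hG
  · intro z
    obtain ⟨G, hG1, hG2⟩ := exists_skew (A + z • B) (by simpa using hX 1 z)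
      (by simpa using hk 1 z (Or.inl one_ne_zero)) S hS (by simpa using htr 1 z)
    refine ⟨⟨G, fun i j => ?_⟩, ?_⟩
    · exact congrFun (congrFun hG1 i) j
    · rw [hsum, had]; exact hG2

end HV

namespace HV

open Matrix

variable {d n : ℕ}

theorem coord_span (m : Idx d) : ∃ (s : Finset (ℝ × ℝ × ℝ)) (w : ℝ × ℝ × ℝ → ℝ), ∀ c : Idx d → ℝ,
    c m = ∑ p ∈ s, w p * evR c p.1 p.2.1 p.2.2 := by
  let e : ℝ × ℝ × ℝ → Module.Dual ℝ (Idx d → ℝ) := fun p =>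
    { toFun := fun c => evR c p.1 p.2.1 p.2.2
      map_add' := fun a b => evR_add a b _ _ _
      map_smul' := fun a b => evR_smul a b _ _ _ }
  have h : Submodule.span ℝ (Set.range e) = ⊤ := by
    apply Submodule.span_eq_top_of_ne_zero
    intro z hz
    by_contra hc
    push Not at hc
    apply hz
    apply evR_inj
    intro t x y
    have h1 := hc (e (t, x, y)) ⟨_, rfl⟩
    have h2 : evR (0 : Idx d → ℝ) t x y = 0 := by simp [evR]
    rw [h2]; exact h1
  have hm : (LinearMap.proj m : (Idx d → ℝ) →ₗ[ℝ] ℝ) ∈ Submodule.span ℝ (Set.range e) := by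
    rw [h]; trivial
  rw [Finsupp.mem_span_range_iff_exists_finsupp] at hm
  obtain ⟨f, hf⟩ := hm
  refine ⟨f.support, f, fun c => ?_⟩
  have := congrArg (fun l => l c) hf
  simp only [Finsupp.sum, LinearMap.sum_apply, LinearMap.smul_apply, smul_eq_mul] at this
  exact this.symm

theorem contDiff_of_ev {V : Type*} [NormedAddCommGroup V] [NormedSpace ℝ V] {f : V → Idx d → ℝ}
    (h : ∀ t x y : ℝ, ContDiff ℝ 1 fun a => evR (f a) t x y) : ContDiff ℝ 1 f := by
  rw [contDiff_pi]
  intro m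
  obtain ⟨s, w, hs⟩ := coord_span m
  simp only [hs]
  exact ContDiff.sum fun p _ => contDiff_const.mul (h _ _ _)

/-- Jacobi's formula. -/
theorem jacobi {𝕜 : Type*} [RCLike 𝕜] (M N : Matrix (Fin d) (Fin d) 𝕜) :
    HasDerivAt (fun ε : 𝕜 => (M + ε • N).det) (adjugate M * N).trace 0 := by
  let f : ContinuousMultilinearMap 𝕜 (fun _ : Fin d => (Fin d → 𝕜)) 𝕜 :=
    { (Matrix.detRowAlternating (R := 𝕜) (n := Fin d)).toMultilinearMap with
      cont := by
        change Continuous fun M : Matrix (Fin d) (Fin d) 𝕜 => M.det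
        exact continuous_id.matrix_det }
  have hf : ∀ M : Matrix (Fin d) (Fin d) 𝕜, f (fun i => M i) = M.det := fun M => rfl
  have h1 := f.hasFDerivAt (x := fun i => M i)
  have h2 : HasDerivAt (fun ε : 𝕜 => (fun i => M i) + ε • (fun i => N i)) (fun i => N i) 0 := by
    have := ((hasDerivAt_id (0 : 𝕜)).smul_const (fun i => N i)).const_add (fun i => M i)
    simpa using this
  have h3 : (fun i => M i) + (0 : 𝕜) • (fun i => N i) = fun i => M i := by simp
  have h4 := HasFDerivAt.comp_hasDerivAt (0 : 𝕜) (h3.symm ▸ h1) h2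
  have h5 : (adjugate M * N).trace = f.linearDeriv (fun i => M i) (fun i => N i) := by
    rw [ContinuousMultilinearMap.linearDeriv_apply, Matrix.trace_mul_comm]
    simp only [Matrix.trace, Matrix.diag, Matrix.mul_apply]
    refine Finset.sum_congr rfl fun i _ => ?_
    have h6 : f (Function.update (fun i => M i) i (N i)) = (M.updateRow i (N i)).det := rfl
    rw [h6, ← Matrix.cramer_transpose_apply, Matrix.cramer_eq_adjugate_mulVec,
      ← Matrix.adjugate_transpose]
    simp [Matrix.mulVec, dotProduct, mul_comm]
  rw [h5]
  rw [h3] at h4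
  exact h4

/-- The complex pencil. -/
noncomputable def Mc (A B : Matrix (Fin d) (Fin d) ℝ) (t x y : ℂ) : Matrix (Fin d) (Fin d) ℂ :=
  t • 1 + x • A.map Complex.ofReal + y • B.map Complex.ofReal

/-- The real pencil. -/
noncomputable def Mr (A B : Matrix (Fin d) (Fin d) ℝ) (t x y : ℝ) : Matrix (Fin d) (Fin d) ℝ :=
  t • 1 + x • A + y • B

theorem Mc_ofReal (A B : Matrix (Fin d) (Fin d) ℝ) (t x y : ℝ) :
    Mc A B t x y = Complex.ofRealHom.mapMatrix (Mr A B t x y) := by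
  ext i j
  by_cases h : i = j
  · subst h; simp [Mc, Mr]
  · simp [Mc, Mr, Matrix.one_apply, h]

/-- The polynomial pencil. -/
noncomputable def Mp (A B : Matrix (Fin d) (Fin d) ℝ) :
    Matrix (Fin d) (Fin d) (MvPolynomial (Fin 3) ℝ) :=
  Matrix.of fun i j => MvPolynomial.C ((1 : Matrix (Fin d) (Fin d) ℝ) i j) * MvPolynomial.X 0 +
    MvPolynomial.C (A i j) * MvPolynomial.X 1 + MvPolynomial.C (B i j) * MvPolynomial.X 2

theorem det_homog {M : Matrix (Fin n) (Fin n) (MvPolynomial (Fin 3) ℝ)}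
    (h : ∀ i j, (M i j).IsHomogeneous 1) : M.det.IsHomogeneous n := by
  rw [Matrix.det_apply]
  refine MvPolynomial.IsHomogeneous.sum _ _ _ fun σ _ => ?_
  have h1 : (∏ i, M (σ i) i).IsHomogeneous (∑ _i : Fin n, 1) :=
    MvPolynomial.IsHomogeneous.prod _ _ _ fun i _ => h _ _
  simp only [Finset.sum_const, Finset.card_univ, Fintype.card_fin, smul_eq_mul, mul_one] at h1
  rcases Int.units_eq_one_or (Equiv.Perm.sign σ) with h2 | h2 <;> rw [h2]
  · simpa using h1
  · simpa using h1.neg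

theorem Mp_homog (A B : Matrix (Fin d) (Fin d) ℝ) (i j) : (Mp A B i j).IsHomogeneous 1 :=
  ((MvPolynomial.isHomogeneous_C_mul_X _ _).add (MvPolynomial.isHomogeneous_C_mul_X _ _)).add
    (MvPolynomial.isHomogeneous_C_mul_X _ _)

theorem Mp_aeval (A B : Matrix (Fin d) (Fin d) ℝ) (t x y : ℂ) :
    (MvPolynomial.aeval ![t, x, y] : MvPolynomial (Fin 3) ℝ →ₐ[ℝ] ℂ).mapMatrix (Mp A B) =
      Mc A B t x y := by
  ext i j
  simp only [Mp, Mc, AlgHom.mapMatrix_apply, Matrix.map_apply, Matrix.of_apply, map_add, map_mul,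
    MvPolynomial.aeval_X, MvPolynomial.aeval_C, Matrix.add_apply, Matrix.smul_apply]
  by_cases h : i = j
  · subst h; simp [mul_comm]
  · simp [Matrix.one_apply, h, mul_comm]

theorem exists_det (a : ℝ) (A B : Matrix (Fin d) (Fin d) ℝ) : ∃ c : Idx d → ℝ,
    ∀ t x y : ℂ, ev c t x y = a * (Mc A B t x y).det := by
  have h : (MvPolynomial.C a * (Mp A B).det).IsHomogeneous d :=
    (det_homog (Mp_homog A B)).C_mul a
  refine ⟨cof d (MvPolynomial.C a * (Mp A B).det), fun t x y => ?_⟩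
  rw [ev_cof h, map_mul, MvPolynomial.aeval_C, ← Mp_aeval, AlgHom.map_det]
  rfl

theorem real_of_complex_det {a : ℝ} {A B : Matrix (Fin d) (Fin d) ℝ} {c : Idx d → ℝ}
    (h : ∀ t x y : ℂ, ev c t x y = a * (Mc A B t x y).det) (t x y : ℝ) :
    evR c t x y = a * (Mr A B t x y).det := by
  apply Complex.ofReal_injective
  rw [← ev_ofReal, h, Mc_ofReal, Complex.ofReal_mul, ← RingHom.map_det]
  rfl

theorem complex_of_real_det {a : ℝ} {A B : Matrix (Fin d) (Fin d) ℝ} {c : Idx d → ℝ}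
    (h : ∀ t x y : ℝ, evR c t x y = a * (Mr A B t x y).det) (t x y : ℂ) :
    ev c t x y = a * (Mc A B t x y).det := by
  obtain ⟨c', hc'⟩ := exists_det a A B
  have : c = c' := evR_inj fun t x y => by rw [h, real_of_complex_det hc']
  rw [this]; exact hc' t x y

theorem exists_adj (A B S : Matrix (Fin (n + 1)) (Fin (n + 1)) ℝ) : ∃ c : Idx n → ℝ,
    ∀ t x y : ℂ, ev c t x y = (S.map Complex.ofReal * adjugate (Mc A B t x y)).trace := by
  have h1 : ∀ i j, (adjugate (Mp A B) i j).IsHomogeneous n := by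
    intro i j
    rw [Matrix.adjugate_fin_succ_eq_det_submatrix]
    have h2 : ((Mp A B).submatrix j.succAbove i.succAbove).det.IsHomogeneous n :=
      det_homog fun _ _ => Mp_homog A B _ _
    have := h2.C_mul ((-1) ^ ((j + i : ℕ)))
    simpa using this
  have h : (∑ i, ∑ j, MvPolynomial.C (S i j) * adjugate (Mp A B) j i).IsHomogeneous n :=
    MvPolynomial.IsHomogeneous.sum _ _ _ fun i _ => MvPolynomial.IsHomogeneous.sum _ _ _ fun j _ =>
      (h1 j i).C_mul _
  refine ⟨cof n (∑ i, ∑ j, MvPolynomial.C (S i j) * adjugate (Mp A B) j i), fun t x y => ?_⟩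
  rw [ev_cof h, ← Mp_aeval, ← AlgHom.map_adjugate]
  simp only [map_sum, map_mul, MvPolynomial.aeval_C, Matrix.trace, Matrix.diag, Matrix.mul_apply]
  rfl

theorem real_of_complex_adj {A B S : Matrix (Fin (n + 1)) (Fin (n + 1)) ℝ} {c : Idx n → ℝ}
    (h : ∀ t x y : ℂ, ev c t x y = (S.map Complex.ofReal * adjugate (Mc A B t x y)).trace)
    (t x y : ℝ) : evR c t x y = (S * adjugate (Mr A B t x y)).trace := by
  apply Complex.ofReal_injective
  rw [← ev_ofReal, h, Mc_ofReal, ← RingHom.map_adjugate]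
  have : S.map Complex.ofReal = Complex.ofRealHom.mapMatrix S := rfl
  rw [this, ← map_mul]
  simp only [Matrix.trace, Matrix.diag, RingHom.mapMatrix_apply, Matrix.map_apply,
    Complex.ofReal_sum]
  rfl

/-- Symmetric matrix from its entries. -/
def sy : (Sym2 (Fin d) → ℝ) →ₗ[ℝ] Matrix (Fin d) (Fin d) ℝ where
  toFun φ := Matrix.of fun i j => φ s(i, j)
  map_add' _ _ := rfl
  map_smul' _ _ := rfl

theorem sy_apply (φ : Sym2 (Fin d) → ℝ) (i j : Fin d) : sy φ i j = φ s(i, j) := rfl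

theorem sy_symm (φ : Sym2 (Fin d) → ℝ) : (sy φ)ᵀ = sy φ := by
  ext i j
  change φ s(j, i) = φ s(i, j)
  rw [Sym2.eq_swap]

theorem exists_sy {S : Matrix (Fin d) (Fin d) ℝ} (h : Sᵀ = S) : ∃ φ, sy φ = S := by
  refine ⟨fun z => Sym2.lift ⟨fun i j => S i j, fun i j => ?_⟩ z, ?_⟩
  · exact congrFun (congrFun h j) i
  · ext i j; rfl

theorem sy_inj {φ : Sym2 (Fin d) → ℝ} (h : sy φ = 0) : φ = 0 := by
  funext z
  induction z using Sym2.ind with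
  | _ i j => exact congrFun (congrFun h i) j

theorem adj_surj {A B : Matrix (Fin (n + 1)) (Fin (n + 1)) ℝ} (hA : Aᵀ = A) (hB : Bᵀ = B)
    (hK : PencilK (A.map Complex.ofReal) (B.map Complex.ofReal)) (c : Idx n → ℝ) :
    ∃ S : Matrix (Fin (n + 1)) (Fin (n + 1)) ℝ, Sᵀ = S ∧
      ∀ t x y : ℝ, evR c t x y = (S * adjugate (Mr A B t x y)).trace := by
  choose F hF using fun S => exists_adj A B S
  let L : (Sym2 (Fin (n + 1)) → ℝ) →ₗ[ℝ] (Idx n → ℝ) :=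
    { toFun := fun φ => F (sy φ)
      map_add' := by
        intro a b
        apply evR_inj
        intro t x y
        rw [evR_add, real_of_complex_adj (hF _), real_of_complex_adj (hF _),
          real_of_complex_adj (hF _), map_add, add_mul, Matrix.trace_add]
      map_smul' := by
        intro r a
        apply evR_inj
        intro t x y
        rw [RingHom.id_apply, evR_smul, real_of_complex_adj (hF _), real_of_complex_adj (hF _),
          map_smul, Matrix.smul_mul, Matrix.trace_smul, smul_eq_mul] }
  have hinj : Function.Injective L := by
    rw [injective_iff_map_eq_zero]
    intro φ hφ
    apply sy_inj
    have h0 : (sy φ).map Complex.ofReal = 0 := by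
      refine sym_zero _ _ ?_ ?_ hK _ ?_ ?_
      · rw [← Matrix.transpose_map, hA]
      · rw [← Matrix.transpose_map, hB]
      · rw [← Matrix.transpose_map, sy_symm]
      · intro t x y
        have := hF (sy φ) t x y
        have h1 : F (sy φ) = 0 := hφ
        rw [h1] at this
        rw [show (t • 1 + x • A.map Complex.ofReal + y • B.map Complex.ofReal) = Mc A B t x y from
          rfl, ← this]
        simp [ev]
    ext i j
    have := congrFun (congrFun h0 i) j
    simpa using this
  have hsurj : Function.Surjective L := by
    rw [← LinearMap.injective_iff_surjective_of_finrank_eq_finrank]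
    · exact hinj
    · rw [Module.finrank_pi, Module.finrank_pi, card_idx, Sym2.card, Fintype.card_fin]
  obtain ⟨φ, hφ⟩ := hsurj c
  refine ⟨sy φ, sy_symm φ, fun t x y => ?_⟩
  rw [← hφ]
  exact real_of_complex_adj (hF _) t x y

theorem deriv_surj {A B : Matrix (Fin (n + 1)) (Fin (n + 1)) ℝ} (hA : Aᵀ = A) (hB : Bᵀ = B)
    (hK : PencilK (A.map Complex.ofReal) (B.map Complex.ofReal)) {a : ℝ} (ha : a ≠ 0)
    (m : Idx (n + 1)) : ∃ (α : ℝ) (S1 S2 : Matrix (Fin (n + 1)) (Fin (n + 1)) ℝ),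
      S1ᵀ = S1 ∧ S2ᵀ = S2 ∧ ∀ t x y : ℝ, t ^ m.1 0 * x ^ m.1 1 * y ^ m.1 2 =
        α * (Mr A B t x y).det + a * (adjugate (Mr A B t x y) * (x • S1 + y • S2)).trace := by
  have hsum := idx_sum m
  have key : ∀ i j k : ℕ, i + j + k = n → ∃ S : Matrix (Fin (n + 1)) (Fin (n + 1)) ℝ, Sᵀ = S ∧
      ∀ t x y : ℝ, t ^ i * x ^ j * y ^ k = (S * adjugate (Mr A B t x y)).trace := by
    intro i j k hijk
    let q : Fin 3 →₀ ℕ := Finsupp.equivFunOnFinite.symm ![i, j, k]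
    have hq : q ∈ (Finset.univ : Finset (Fin 3)).finsuppAntidiag n := idx_mem (by simpa [q] using hijk)
    obtain ⟨S, hS, h⟩ := adj_surj hA hB hK (Pi.single ⟨q, hq⟩ 1)
    refine ⟨S, hS, fun t x y => ?_⟩
    rw [← h, evR, Finset.sum_eq_single ⟨q, hq⟩]
    · simp [q]
    · intro b _ hb; simp [Pi.single_eq_of_ne hb]
    · simp
  have hMs : ∀ t x y, (Mr A B t x y)ᵀ = Mr A B t x y := by
    intro t x y
    simp [Mr, Matrix.transpose_add, Matrix.transpose_smul, hA, hB]
  by_cases h1 : m.1 1 = 0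
  · by_cases h2 : m.1 2 = 0
    · obtain ⟨S, hS, h⟩ := key n 0 0 (by omega)
      refine ⟨S.trace, (-(1 / (2 * a))) • (S * A + A * S), (-(1 / (2 * a))) • (S * B + B * S), ?_, ?_, ?_⟩
      · rw [Matrix.transpose_smul, Matrix.transpose_add, Matrix.transpose_mul, Matrix.transpose_mul,
          hS, hA, add_comm (A * S)]
      · rw [Matrix.transpose_smul, Matrix.transpose_add, Matrix.transpose_mul, Matrix.transpose_mul,
          hS, hB, add_comm (B * S)]
      · intro t x y
        have e0 := h t x y
        have hm0 : m.1 0 = n + 1 := by omega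
        rw [hm0, h1, h2]
        set M := Mr A B t x y with hM
        have hadj : (adjugate M)ᵀ = adjugate M := by rw [Matrix.adjugate_transpose, hM, hMs]
        have sw : ∀ Z : Matrix (Fin (n + 1)) (Fin (n + 1)) ℝ, Zᵀ = Z →
            (adjugate M * (Z * S)).trace = (adjugate M * (S * Z)).trace := by
          intro Z hZ
          rw [← Matrix.trace_transpose, Matrix.transpose_mul, Matrix.transpose_mul, hadj, hS, hZ,
            Matrix.trace_mul_comm]
        have e1 : (adjugate M * (S * M)).trace = S.trace * M.det := by
          rw [Matrix.trace_mul_comm, mul_assoc, Matrix.mul_adjugate]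
          simp [mul_comm]
        have e2 : (adjugate M * (S * M)).trace = t * (S * adjugate M).trace +
            x * (adjugate M * (S * A)).trace + y * (adjugate M * (S * B)).trace := by
          rw [Matrix.trace_mul_comm S]
          nth_rewrite 2 [hM]
          simp only [Mr, mul_add, Matrix.mul_smul, Matrix.trace_add, Matrix.trace_smul, mul_one,
            smul_eq_mul]
        simp only [mul_add, Matrix.mul_smul, Matrix.trace_add, Matrix.trace_smul, smul_eq_mul,
          sw A hA, sw B hB]
        rw [e1] at e2
        rw [e2, ← e0]
        field_simp
        ring
    · obtain ⟨S, hS, h⟩ := key (m.1 0) (m.1 1) (m.1 2 - 1) (by omega)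
      refine ⟨0, 0, a⁻¹ • S, by simp, by rw [Matrix.transpose_smul, hS], fun t x y => ?_⟩
      have e : m.1 2 = (m.1 2 - 1) + 1 := by omega
      rw [e, pow_succ, ← mul_assoc, h, Matrix.trace_mul_comm]
      simp only [smul_zero, zero_add, Matrix.mul_smul, Matrix.trace_smul, smul_eq_mul]
      field_simp
      ring
  · obtain ⟨S, hS, h⟩ := key (m.1 0) (m.1 1 - 1) (m.1 2) (by omega)
    refine ⟨0, a⁻¹ • S, 0, by rw [Matrix.transpose_smul, hS], by simp, fun t x y => ?_⟩
    have e : m.1 1 = (m.1 1 - 1) + 1 := by omega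
    have e' : t ^ m.1 0 * x ^ m.1 1 * y ^ m.1 2 = x * (t ^ m.1 0 * x ^ (m.1 1 - 1) * y ^ m.1 2) := by
      rw [e, pow_succ]; simp only [Nat.add_sub_cancel]; ring
    rw [e', h, Matrix.trace_mul_comm]
    simp only [smul_zero, add_zero, Matrix.mul_smul, Matrix.trace_smul, smul_eq_mul]
    field_simp
    ring

/-- The set of forms with a determinantal representation. -/
def Im (d : ℕ) : Set (Idx d → ℝ) :=
  {c | ∃ (a : ℝ) (A B : Matrix (Fin d) (Fin d) ℝ), Aᵀ = A ∧ Bᵀ = B ∧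
    ∀ t x y : ℝ, evR c t x y = a * (Mr A B t x y).det}

theorem im_nhds {A B : Matrix (Fin (n + 1)) (Fin (n + 1)) ℝ} (hA : Aᵀ = A) (hB : Bᵀ = B)
    (hK : PencilK (A.map Complex.ofReal) (B.map Complex.ofReal)) {a : ℝ} (ha : a ≠ 0)
    {c : Idx (n + 1) → ℝ} (hc : ∀ t x y : ℝ, evR c t x y = a * (Mr A B t x y).det) :
    Im (n + 1) ∈ nhds c := by
  obtain ⟨φA, hφA⟩ := exists_sy hA
  obtain ⟨φB, hφB⟩ := exists_sy hB
  choose G hG using fun (p : ℝ × (Sym2 (Fin (n + 1)) → ℝ) × (Sym2 (Fin (n + 1)) → ℝ)) =>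
    exists_det p.1 (sy p.2.1) (sy p.2.2)
  replace hG := fun p => real_of_complex_det (hG p)
  have hsm : ContDiff ℝ 1 G := by
    apply contDiff_of_ev
    intro t x y
    simp only [hG, Matrix.det_apply, Mr]
    refine contDiff_fst.mul (ContDiff.sum fun σ _ => ?_)
    refine ContDiff.const_smul _ (contDiff_prod fun i _ => ?_)
    simp only [sy_apply, Matrix.add_apply, Matrix.smul_apply, smul_eq_mul]
    fun_prop
  set p0 : ℝ × (Sym2 (Fin (n + 1)) → ℝ) × (Sym2 (Fin (n + 1)) → ℝ) := (a, φA, φB) with hp0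
  have hGp : G p0 = c := by
    apply evR_inj
    intro t x y
    rw [hG, hc, hp0]
    simp only [hφA, hφB]
  have hstr : HasStrictFDerivAt G (fderiv ℝ G p0) p0 :=
    hsm.contDiffAt.hasStrictFDerivAt one_ne_zero
  have hD : ∀ (α : ℝ) (ψ1 ψ2 : Sym2 (Fin (n + 1)) → ℝ) (t x y : ℝ),
      evR (fderiv ℝ G p0 (α, ψ1, ψ2)) t x y = α * (Mr A B t x y).det +
        a * (adjugate (Mr A B t x y) * (x • sy ψ1 + y • sy ψ2)).trace := by
    intro α ψ1 ψ2 t x y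
    let e : (Idx (n + 1) → ℝ) →L[ℝ] ℝ := LinearMap.toContinuousLinearMap
      { toFun := fun c => evR c t x y
        map_add' := fun a b => evR_add a b _ _ _
        map_smul' := fun a b => evR_smul a b _ _ _ }
    have h1 : HasDerivAt (fun ε : ℝ => p0 + ε • (α, ψ1, ψ2)) (α, ψ1, ψ2) 0 := by
      have := ((hasDerivAt_id (0 : ℝ)).smul_const (α, ψ1, ψ2)).const_add p0
      simpa using this
    have h2 : HasFDerivAt G (fderiv ℝ G p0) (p0 + (0 : ℝ) • (α, ψ1, ψ2)) := by
      rw [zero_smul, add_zero]; exact hstr.hasFDerivAt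
    have h3 := e.hasFDerivAt.comp_hasDerivAt (0 : ℝ) (h2.comp_hasDerivAt (0 : ℝ) h1)
    have h4 := jacobi (Mr A B t x y) (x • sy ψ1 + y • sy ψ2)
    have h5 : HasDerivAt (fun ε : ℝ => a + ε * α) α 0 := by
      have := ((hasDerivAt_id (0 : ℝ)).mul_const α).const_add a
      simpa using this
    have h6 := h5.mul h4
    have h7 : (e ∘ G ∘ fun ε : ℝ => p0 + ε • (α, ψ1, ψ2)) = (fun ε : ℝ => a + ε * α) *
        fun ε : ℝ => (Mr A B t x y + ε • (x • sy ψ1 + y • sy ψ2)).det := by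
      funext ε
      change evR (G (p0 + ε • (α, ψ1, ψ2))) t x y = _
      rw [hG, hp0]
      simp only [Prod.smul_mk, Prod.mk_add_mk, map_add, map_smul, hφA, hφB, Pi.mul_apply,
        smul_eq_mul]
      congr 2
      simp only [Mr, smul_add, smul_smul, mul_comm ε]
      abel
    have h8 : HasDerivAt (e ∘ G ∘ fun ε : ℝ => p0 + ε • (α, ψ1, ψ2))
      (evR (fderiv ℝ G p0 (α, ψ1, ψ2)) t x y) 0 := h3
    rw [h7] at h8
    have h9 := h8.unique h6
    rw [h9]; simp
  have hsurj : (fderiv ℝ G p0).range = ⊤ := by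
    rw [eq_top_iff]
    intro f _
    have hm : ∀ m : Idx (n + 1), (Pi.single m 1 : Idx (n + 1) → ℝ) ∈ (fderiv ℝ G p0).range := by
      intro m
      obtain ⟨α, S1, S2, h1, h2, h⟩ := deriv_surj hA hB hK ha m
      obtain ⟨ψ1, rfl⟩ := exists_sy h1
      obtain ⟨ψ2, rfl⟩ := exists_sy h2
      refine ⟨(α, ψ1, ψ2), ?_⟩
      apply evR_inj
      intro t x y
      refine (hD α ψ1 ψ2 t x y).trans ?_
      rw [← h, evR, Finset.sum_eq_single m]
      · simp
      · intro b _ hb; simp [Pi.single_eq_of_ne hb]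
      · simp
    have : f = ∑ m, f m • (Pi.single m 1 : Idx (n + 1) → ℝ) := by
      funext k
      simp [Finset.sum_apply, Pi.single_apply]
    rw [this]
    exact Submodule.sum_mem _ fun m _ => Submodule.smul_mem _ _ (hm m)
  have hmap := hstr.map_nhds_eq_of_surj hsurj
  rw [hGp] at hmap
  rw [← hmap, Filter.mem_map]
  refine Filter.univ_mem' fun p => ?_
  exact ⟨p.1, sy p.2.1, sy p.2.2, sy_symm _, sy_symm _, hG p⟩

end HV

namespace HV

open Matrix

variable {d n : ℕ}

/-- A nonreal singular point of the projective curve. -/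
def Bad (c : Idx d → ℝ) : Prop :=
  ∃ u z : ℂ, 0 < z.im ∧ ev c u z 1 = 0 ∧ evt c u z 1 = 0 ∧ evx c u z 1 = 0

theorem hasDeriv_t (c : Idx d → ℝ) (t x y : ℂ) :
    HasDerivAt (fun t => ev c t x y) (evt c t x y) t := by
  have := (evP c x y).hasDerivAt t
  rw [evP_deriv] at this
  simpa only [evP_eval] using this

theorem hasDeriv_x (c : Idx d → ℝ) (t x y : ℂ) :
    HasDerivAt (fun x => ev c t x y) (evx c t x y) x := by
  unfold ev evx
  apply HasDerivAt.fun_sum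
  intro m _
  exact (((hasDerivAt_pow (m.1 1) x).const_mul (t ^ m.1 0)).mul_const (y ^ m.1 2)).const_mul _

theorem evt_det {a : ℝ} {A B : Matrix (Fin d) (Fin d) ℝ} {c : Idx d → ℝ}
    (h : ∀ t x y : ℂ, ev c t x y = a * (Mc A B t x y).det) (t x y : ℂ) :
    evt c t x y = a * (adjugate (Mc A B t x y) * 1).trace := by
  have h1 := (jacobi (Mc A B t x y) 1).const_mul (a : ℂ)
  have h2 : HasDerivAt (fun ε : ℂ => ev c (t + ε) x y) (evt c t x y) 0 := by
    have h3 := hasDeriv_t c (t + 0) x y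
    have := h3.comp_const_add t 0
    simpa using this
  have h4 : (fun ε : ℂ => ev c (t + ε) x y) = fun ε : ℂ => a * (Mc A B t x y + ε • 1).det := by
    funext ε
    rw [h]
    congr 2
    simp only [Mc, add_smul]; abel
  rw [h4] at h2
  exact h2.unique h1

theorem evx_det {a : ℝ} {A B : Matrix (Fin d) (Fin d) ℝ} {c : Idx d → ℝ}
    (h : ∀ t x y : ℂ, ev c t x y = a * (Mc A B t x y).det) (t x y : ℂ) :
    evx c t x y = a * (adjugate (Mc A B t x y) * A.map Complex.ofReal).trace := by
  have h1 := (jacobi (Mc A B t x y) (A.map Complex.ofReal)).const_mul (a : ℂ)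
  have h2 : HasDerivAt (fun ε : ℂ => ev c t (x + ε) y) (evx c t x y) 0 := by
    have h3 := hasDeriv_x c t (x + 0) y
    have := h3.comp_const_add x 0
    simpa using this
  have h4 : (fun ε : ℂ => ev c t (x + ε) y) =
      fun ε : ℂ => a * (Mc A B t x y + ε • A.map Complex.ofReal).det := by
    funext ε
    rw [h]
    congr 2
    simp only [Mc, add_smul]; abel
  rw [h4] at h2
  exact h2.unique h1

theorem ker1_of_adj {M : Matrix (Fin d) (Fin d) ℂ} (h : adjugate M ≠ 0) : Ker1 M := by
  have : ∃ i j, adjugate M i j ≠ 0 := by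
    by_contra hc
    push Not at hc
    exact h (by ext i j; exact hc i j)
  obtain ⟨i, j, hij⟩ := this
  rw [Matrix.adjugate_apply] at hij
  have key : ∀ v : Fin d → ℂ, M *ᵥ v = 0 → v i = 0 → v = 0 := by
    intro v hv hi
    apply Matrix.eq_zero_of_mulVec_eq_zero hij
    funext k
    by_cases hk : k = j
    · subst hk
      simp [Matrix.mulVec, Matrix.updateRow_self, hi]
    · have := congrFun hv k
      simp only [Matrix.mulVec, Matrix.updateRow_ne hk] at this ⊢
      exact this
  intro v w hv hw hv0
  have hvi : v i ≠ 0 := fun h0 => hv0 (key v hv h0)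
  refine ⟨w i / v i, ?_⟩
  rw [← sub_eq_zero]
  apply key
  · rw [Matrix.mulVec_sub, Matrix.mulVec_smul, hv, hw]; simp
  · simp [hvi]

theorem pencilK_of {a : ℝ} {A B : Matrix (Fin (n + 1)) (Fin (n + 1)) ℝ} {c : Idx (n + 1) → ℝ}
    (h : ∀ t x y : ℂ, ev c t x y = a * (Mc A B t x y).det) (hS : HypS c) (hb : ¬ Bad c) :
    PencilK (A.map Complex.ofReal) (B.map Complex.ofReal) := by
  intro t x y hxy
  apply ker1_of_adj
  change adjugate (Mc A B t x y) ≠ 0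
  intro h0
  have hsc : ∀ l, adjugate (Mc A B (l * t) (l * x) (l * y)) = 0 := by
    intro l
    have : Mc A B (l * t) (l * x) (l * y) = l • Mc A B t x y := by
      simp only [Mc, mul_smul, smul_add]
    rw [this, Matrix.adjugate_smul, h0, smul_zero]
  have hz : ∀ t x y, adjugate (Mc A B t x y) = 0 →
      ev c t x y = 0 ∧ evt c t x y = 0 ∧ evx c t x y = 0 := by
    intro t x y h1
    refine ⟨?_, ?_, ?_⟩
    · have h2 := Matrix.mul_adjugate (Mc A B t x y)
      rw [h1, mul_zero] at h2
      have h3 := congrFun (congrFun h2 0) 0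
      rw [h]
      have h4 : (Mc A B t x y).det = 0 := by simpa using h3.symm
      rw [h4, mul_zero]
    · rw [evt_det h, h1]; simp
    · rw [evx_det h, h1]; simp
  by_cases hy : y = 0
  · subst hy
    have hx : x ≠ 0 := by tauto
    obtain ⟨e1, e2, -⟩ := hz _ _ _ (hsc x⁻¹)
    rw [inv_mul_cancel₀ hx, mul_zero] at e1 e2
    exact (hS.real (u := x⁻¹ * t) (x := 1) (y := 0) (Or.inl one_ne_zero) (by simpa using e1)).2
      (by simpa using e2)
  · obtain ⟨e1, e2, e3⟩ := hz _ _ _ (hsc y⁻¹)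
    rw [inv_mul_cancel₀ hy] at e1 e2 e3
    set u := y⁻¹ * t
    set z := y⁻¹ * x
    rcases lt_trichotomy z.im 0 with hz1 | hz1 | hz1
    · apply hb
      refine ⟨starRingEnd ℂ u, starRingEnd ℂ z, by simpa using hz1, ?_, ?_, ?_⟩
      · have := ev_conj c u z 1
        rw [e1] at this; simpa using this
      · have := evt_conj c u z 1
        rw [e2] at this; simpa using this
      · have := evx_conj c u z 1
        rw [e3] at this; simpa using this
    · have hzr : z = (z.re : ℂ) := Complex.ext (by simp) (by simp [hz1])
      rw [hzr] at e1 e2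
      exact (hS.real (u := u) (x := z.re) (y := 1) (Or.inr one_ne_zero) (by simpa using e1)).2
        (by simpa using e2)
    · exact hb ⟨u, z, hz1, e1, e2, e3⟩

theorem lead_det {a : ℝ} {A B : Matrix (Fin d) (Fin d) ℝ} {c : Idx d → ℝ}
    (h : ∀ t x y : ℝ, evR c t x y = a * (Mr A B t x y).det) : evR c 1 0 0 = a := by
  rw [h]; simp [Mr]

theorem im_open_at {c : Idx (n + 1) → ℝ} (hc : c ∈ Im (n + 1)) (hS : HypS c) (hb : ¬ Bad c) :
    Im (n + 1) ∈ nhds c := by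
  obtain ⟨a, A, B, hA, hB, h⟩ := hc
  refine im_nhds hA hB (pencilK_of (complex_of_real_det h) hS hb) ?_ h
  rw [← lead_det h]; exact hS.1.ne'

theorem entry_bound {A : Matrix (Fin d) (Fin d) ℝ} (hA : Aᵀ = A) {R : ℝ}
    (h : ∀ l : ℝ, (l • (1 : Matrix (Fin d) (Fin d) ℝ) + A).det = 0 → |l| ≤ R) (i j : Fin d) :
    |A i j| ≤ d * R := by
  have hH : A.IsHermitian := by
    rw [Matrix.IsHermitian, Matrix.conjTranspose_eq_transpose_of_trivial, hA]
  have he : ∀ k, |hH.eigenvalues k| ≤ R := by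
    intro k
    rw [← abs_neg]
    apply h
    rw [← Matrix.exists_mulVec_eq_zero_iff]
    refine ⟨⇑(hH.eigenvectorBasis k), ?_, ?_⟩
    · intro h0
      have h1 := hH.eigenvectorBasis.orthonormal.ne_zero k
      apply h1
      ext i
      exact congrFun h0 i
    · rw [Matrix.add_mulVec, Matrix.smul_mulVec, Matrix.one_mulVec, hH.mulVec_eigenvectorBasis]
      simp
  have hs := hH.spectral_theorem
  rw [Unitary.conjStarAlgAut_apply] at hs
  have hU : ∀ i j, |(hH.eigenvectorUnitary : Matrix (Fin d) (Fin d) ℝ) i j| ≤ 1 :=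
    fun i j => entry_norm_bound_of_unitary hH.eigenvectorUnitary.2 i j
  have hij := congrFun (congrFun hs i) j
  rw [hij, Matrix.mul_apply]
  refine (Finset.abs_sum_le_sum_abs _ _).trans ?_
  have : (d : ℝ) * R = ∑ _k : Fin d, R := by simp
  rw [this]
  refine Finset.sum_le_sum fun k _ => ?_
  rw [Matrix.mul_diagonal, abs_mul, abs_mul]
  have h1 := hU i k
  have h2 : |(star (hH.eigenvectorUnitary : Matrix (Fin d) (Fin d) ℝ)) k j| ≤ 1 := by
    rw [Matrix.star_apply]; simpa using hU j k
  have h3 := he k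
  simp only [Function.comp_apply, RCLike.ofReal_real_eq_id, id_eq]
  have hR : 0 ≤ R := (abs_nonneg _).trans h3
  calc _ ≤ 1 * R * 1 := by
        gcongr
    _ = R := by ring

theorem evR_hom (c : Idx d → ℝ) (l t x y : ℝ) :
    evR c (l * t) (l * x) (l * y) = l ^ d * evR c t x y := by
  apply Complex.ofReal_injective
  have := ev_smul c l t x y
  rw [Complex.ofReal_mul, ← ev_ofReal, ← ev_ofReal]
  push_cast
  exact this

theorem im_closed {c : Idx d → ℝ} (hc : c ∈ closure (Im d)) (hl : 0 < evR c 1 0 0) : c ∈ Im d := by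
  have hcont : Continuous fun p : (Idx d → ℝ) × ℝ × ℝ => evR p.1 1 p.2.1 p.2.2 := by
    unfold evR; fun_prop
  have hev : ∀ᶠ p : (Idx d → ℝ) × ℝ × ℝ in nhds (c, 0, 0), 0 < evR p.1 1 p.2.1 p.2.2 :=
    (hcont.tendsto (c, 0, 0)).eventually (lt_mem_nhds hl)
  obtain ⟨ε, hε, hball⟩ := Metric.eventually_nhds_iff_ball.1 hev
  have hroot : ∀ c' ∈ Metric.ball c ε, ∀ l x y : ℝ, |x| ≤ 1 → |y| ≤ 1 →
      evR c' l x y = 0 → |l| ≤ 1 / ε := by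
    intro c' hc' l x y hx hy h0
    by_contra hlt
    push Not at hlt
    have hl0 : l ≠ 0 := by
      rintro rfl
      rw [abs_zero] at hlt
      exact absurd hlt (not_lt.2 (by positivity))
    have h1 := evR_hom c' l⁻¹ l x y
    rw [h0, mul_zero, inv_mul_cancel₀ hl0] at h1
    have h2 : |l|⁻¹ < ε := by
      rw [one_div] at hlt
      exact inv_lt_of_inv_lt₀ hε hlt
    have h3 : ∀ x : ℝ, |x| ≤ 1 → |l⁻¹ * x| < ε := by
      intro x hx
      rw [abs_mul, abs_inv]
      have : 0 ≤ |l|⁻¹ := by positivity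
      nlinarith [abs_nonneg x]
    have h4 := hball (c', l⁻¹ * x, l⁻¹ * y) (by
      rw [Metric.mem_ball, Prod.dist_eq, Prod.dist_eq, max_lt_iff, max_lt_iff]
      refine ⟨hc', ?_, ?_⟩
      · simpa [Real.dist_eq] using h3 x hx
      · simpa [Real.dist_eq] using h3 y hy)
    exact h4.ne' h1
  have hc2 : c ∈ closure (Metric.ball c ε ∩ Im d) :=
    Metric.isOpen_ball.inter_closure ⟨Metric.mem_ball_self hε, hc⟩
  obtain ⟨s, hs, hlim⟩ := mem_closure_iff_seq_limit.1 hc2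
  choose hsb a A B hA hB hdet using hs
  let K : Set (Fin d → Fin d → ℝ) := Set.univ.pi fun _ => Set.univ.pi fun _ =>
    Set.Icc (-(d * (1 / ε))) (d * (1 / ε))
  have hK : IsCompact K := isCompact_univ_pi fun _ => isCompact_univ_pi fun _ => isCompact_Icc
  have hAK : ∀ k, (A k : Fin d → Fin d → ℝ) ∈ K := by
    intro k i _ j _
    refine abs_le.1 (entry_bound (hA k) (R := 1 / ε) ?_ i j)
    intro l hl
    refine hroot _ (hsb k) l 1 0 (by simp) (by simp) ?_
    rw [hdet k]
    simp [Mr, hl]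
  have hBK : ∀ k, (B k : Fin d → Fin d → ℝ) ∈ K := by
    intro k i _ j _
    refine abs_le.1 (entry_bound (hB k) (R := 1 / ε) ?_ i j)
    intro l hl
    refine hroot _ (hsb k) l 0 1 (by simp) (by simp) ?_
    rw [hdet k]
    simp [Mr, hl]
  let AB : ℕ → (Fin d → Fin d → ℝ) × (Fin d → Fin d → ℝ) := fun k => (A k, B k)
  obtain ⟨⟨A0, B0⟩, -, φ, hφ, hlimAB⟩ := (hK.prod hK).tendsto_subseq
    (x := AB) (fun k => ⟨hAK k, hBK k⟩)
  obtain ⟨A1, hA0⟩ : ∃ A1 : Matrix (Fin d) (Fin d) ℝ,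
      Filter.Tendsto (fun k => A (φ k)) Filter.atTop (nhds A1) :=
    ⟨Matrix.of A0, (continuous_fst.tendsto _).comp hlimAB⟩
  obtain ⟨B1, hB0⟩ : ∃ B1 : Matrix (Fin d) (Fin d) ℝ,
      Filter.Tendsto (fun k => B (φ k)) Filter.atTop (nhds B1) :=
    ⟨Matrix.of B0, (continuous_snd.tendsto _).comp hlimAB⟩
  clear hlimAB
  have hs0 : Filter.Tendsto (fun k => s (φ k)) Filter.atTop (nhds c) :=
    hlim.comp hφ.tendsto_atTop
  have hsym : ∀ {F : ℕ → Matrix (Fin d) (Fin d) ℝ} {F0 : Matrix (Fin d) (Fin d) ℝ},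
      Filter.Tendsto F Filter.atTop (nhds F0) → (∀ k, (F k)ᵀ = F k) → F0ᵀ = F0 := by
    intro F F0 hF hk
    have h1 : Filter.Tendsto (fun k => (F k)ᵀ) Filter.atTop (nhds F0ᵀ) :=
      ((continuous_id.matrix_transpose).tendsto F0).comp hF
    simp only [hk] at h1
    exact tendsto_nhds_unique h1 hF
  refine ⟨evR c 1 0 0, A1, B1, hsym hA0 fun k => hA _,
    hsym hB0 fun k => hB _, fun t x y => ?_⟩
  have h1 : Filter.Tendsto (fun k => evR (s (φ k)) t x y) Filter.atTop (nhds (evR c t x y)) :=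
    ((continuous_evR t x y).tendsto c).comp hs0
  have h2 : Filter.Tendsto (fun k => evR (s (φ k)) 1 0 0) Filter.atTop (nhds (evR c 1 0 0)) :=
    ((continuous_evR 1 0 0).tendsto c).comp hs0
  have h3 : Filter.Tendsto (fun k => (Mr (A (φ k)) (B (φ k)) t x y).det) Filter.atTop
      (nhds (Mr (A1) (B1) t x y).det) := by
    have hcM : Continuous fun p : Matrix (Fin d) (Fin d) ℝ × Matrix (Fin d) (Fin d) ℝ =>
        (Mr p.1 p.2 t x y).det := by
      unfold Mr
      apply Continuous.matrix_det
      fun_prop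
    have h4 := hA0.prodMk_nhds hB0
    have h5 := (hcM.tendsto (A1, B1)).comp h4
    exact h5
  refine tendsto_nhds_unique h1 ((h2.mul h3).congr fun k => ?_)
  rw [lead_det (hdet (φ k)), hdet (φ k)]

end HV

namespace HV

variable {d : ℕ}

/-- The six monomials that are solved for. -/
def Sol (m : Idx d) : Prop := (m.1 0 = 0 ∧ m.1 1 ≤ 3) ∨ (m.1 0 = 1 ∧ m.1 1 ≤ 1)

instance (m : Idx d) : Decidable (Sol m) := by unfold Sol; infer_instance

/-- The exponent with given first entries. -/
noncomputable def mk (i j : ℕ) (h : i + j ≤ d) : Idx d :=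
  ⟨Finsupp.equivFunOnFinite.symm ![i, j, d - i - j], idx_mem (by
    change i + j + (d - i - j) = d; omega)⟩

theorem mk_zero (i j : ℕ) (h : i + j ≤ d) : (mk i j h).1 0 = i := rfl

theorem mk_one (i j : ℕ) (h : i + j ≤ d) : (mk i j h).1 1 = j := rfl

theorem eq_mk (i j : ℕ) (h : i + j ≤ d) (m : Idx d) (h0 : m.1 0 = i) (h1 : m.1 1 = j) :
    m = mk i j h := by
  apply Subtype.ext
  ext k
  have a0 := mk_zero i j h
  have a1 := mk_one i j h
  have a2 := idx_sum m
  have a3 := idx_sum (mk i j h)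
  fin_cases k
  · simp only [Fin.zero_eta]; omega
  · simp only [Fin.mk_one]; omega
  · change m.1 2 = (mk i j h).1 2; omega

/-- The coefficient vector of one monomial. -/
noncomputable def mon (d i j : ℕ) : Idx d → ℝ := fun m => if m.1 0 = i ∧ m.1 1 = j then 1 else 0

theorem sum_mon (i j : ℕ) (h : i + j ≤ d) (F : Idx d → ℂ) :
    ∑ m : Idx d, ((mon d i j m : ℝ) : ℂ) * F m = F (mk i j h) := by
  rw [Finset.sum_eq_single (mk i j h)]
  · simp [mon, mk_zero, mk_one]
  · intro m _ hm
    rw [mon, if_neg]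
    · simp
    · rintro ⟨h0, h1⟩
      exact hm (eq_mk i j h m h0 h1)
  · simp

theorem ev_mon (i j : ℕ) (h : i + j ≤ d) (t x : ℂ) : ev (mon d i j) t x 1 = t ^ i * x ^ j := by
  unfold ev
  rw [sum_mon i j h (fun m => t ^ m.1 0 * x ^ m.1 1 * 1 ^ m.1 2), mk_zero, mk_one]; simp

theorem evt_mon (i j : ℕ) (h : i + j ≤ d) (t x : ℂ) :
    evt (mon d i j) t x 1 = i * t ^ (i - 1) * x ^ j := by
  unfold evt
  rw [sum_mon i j h (fun m => m.1 0 * t ^ (m.1 0 - 1) * x ^ m.1 1 * 1 ^ m.1 2), mk_zero, mk_one]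
  simp

theorem evx_mon (i j : ℕ) (h : i + j ≤ d) (t x : ℂ) :
    evx (mon d i j) t x 1 = t ^ i * (j * x ^ (j - 1)) := by
  unfold evx
  rw [sum_mon i j h (fun m => t ^ m.1 0 * (m.1 1 * x ^ (m.1 1 - 1)) * 1 ^ m.1 2), mk_zero, mk_one]
  simp

theorem evc_add (a b : Idx d → ℝ) (t x y : ℂ) : ev (a + b) t x y = ev a t x y + ev b t x y := by
  simp [ev, add_mul, Finset.sum_add_distrib]

theorem evc_smul (r : ℝ) (b : Idx d → ℝ) (t x y : ℂ) : ev (r • b) t x y = r * ev b t x y := by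
  simp [ev, Finset.mul_sum, mul_assoc]

theorem evt_add (a b : Idx d → ℝ) (t x y : ℂ) : evt (a + b) t x y = evt a t x y + evt b t x y := by
  simp [evt, add_mul, Finset.sum_add_distrib]

theorem evt_smul (r : ℝ) (b : Idx d → ℝ) (t x y : ℂ) : evt (r • b) t x y = r * evt b t x y := by
  simp [evt, Finset.mul_sum, mul_assoc]

theorem evx_add (a b : Idx d → ℝ) (t x y : ℂ) : evx (a + b) t x y = evx a t x y + evx b t x y := by
  simp [evx, add_mul, Finset.sum_add_distrib]

theorem evx_smul (r : ℝ) (b : Idx d → ℝ) (t x y : ℂ) : evx (r • b) t x y = r * evx b t x y := by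
  simp [evx, Finset.mul_sum, mul_assoc]

/-- Extension by zero. -/
def ext0 (c : {m : Idx d // ¬ Sol m} → ℝ) : Idx d → ℝ :=
  fun m => if h : ¬ Sol m then c ⟨m, h⟩ else 0

/-- A form given by free coefficients and six special ones. -/
noncomputable def asm (c : {m : Idx d // ¬ Sol m} → ℝ) (a0 a1 a2 a3 b0 b1 : ℝ) : Idx d → ℝ :=
  ext0 c + a0 • mon d 0 0 + a1 • mon d 0 1 + a2 • mon d 0 2 + a3 • mon d 0 3 +
    b0 • mon d 1 0 + b1 • mon d 1 1

theorem exists_asm (hd : 3 ≤ d) (b : Idx d → ℝ) :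
    ∃ c a0 a1 a2 a3 b0 b1, b = asm c a0 a1 a2 a3 b0 b1 := by
  refine ⟨fun m => b m.1, b (mk 0 0 (by omega)), b (mk 0 1 (by omega)), b (mk 0 2 (by omega)),
    b (mk 0 3 (by omega)), b (mk 1 0 (by omega)), b (mk 1 1 (by omega)), ?_⟩
  funext m
  by_cases h : Sol m
  · have h' := h
    rcases h' with ⟨h0, h1⟩ | ⟨h0, h1⟩
    · have h2 : m.1 1 = 0 ∨ m.1 1 = 1 ∨ m.1 1 = 2 ∨ m.1 1 = 3 := by omega
      rcases h2 with h2 | h2 | h2 | h2 <;>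
      · rw [eq_mk _ _ (by omega) m h0 h2] at h ⊢
        simp [asm, ext0, h, mon, mk_zero, mk_one]
    · have h2 : m.1 1 = 0 ∨ m.1 1 = 1 := by omega
      rcases h2 with h2 | h2 <;>
      · rw [eq_mk _ _ (by omega) m h0 h2] at h ⊢
        simp [asm, ext0, h, mon, mk_zero, mk_one]
  · have h0 : ∀ i j, ((i = 0 ∧ j ≤ 3) ∨ (i = 1 ∧ j ≤ 1)) → mon d i j m = 0 := by
      intro i j hij
      rw [mon, if_neg]
      rintro ⟨rfl, rfl⟩
      exact h hij
    simp [asm, ext0, h, h0]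

theorem solve6 {u H Ht Hx : ℂ} {x0 y0 a0 a1 a2 a3 b0 b1 : ℝ} (hy : y0 ≠ 0)
    (e0 : H + (a0 + a1 * (⟨x0, y0⟩ : ℂ) + a2 * (⟨x0, y0⟩ : ℂ) ^ 2 + a3 * (⟨x0, y0⟩ : ℂ) ^ 3)
      + u * (b0 + b1 * (⟨x0, y0⟩ : ℂ)) = 0)
    (et : Ht + (b0 + b1 * (⟨x0, y0⟩ : ℂ)) = 0)
    (ex : Hx + (a1 + 2 * a2 * (⟨x0, y0⟩ : ℂ) + 3 * a3 * (⟨x0, y0⟩ : ℂ) ^ 2) + u * b1 = 0) :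
    ∃ p0 p1 q0 q1 : ℝ,
    b1 = - Ht.im * y0⁻¹ ∧ b0 = - Ht.re - b1 * x0 ∧
    p1 = (-H + u * Ht).im * y0⁻¹ ∧ p0 = (-H + u * Ht).re - p1 * x0 ∧
    q0 + q1 * x0 = (-Hx - u * b1).im * y0⁻¹ / 2 ∧
    q1 = - (((-Hx - u * b1).re - p1) * y0⁻¹ / 2) * y0⁻¹ ∧
    a0 = p0 + (x0 ^ 2 + y0 ^ 2) * q0 ∧ a1 = p1 - 2 * x0 * q0 + (x0 ^ 2 + y0 ^ 2) * q1 ∧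
    a2 = q0 - 2 * x0 * q1 ∧ a3 = q1 := by
  set r := x0 ^ 2 + y0 ^ 2 with hr
  have hw0 : -H + u * Ht =
      a0 + a1 * (⟨x0, y0⟩ : ℂ) + a2 * (⟨x0, y0⟩ : ℂ) ^ 2 + a3 * (⟨x0, y0⟩ : ℂ) ^ 3 := by
    linear_combination -e0 + u * et
  have hw1 : -Hx - u * b1 = a1 + 2 * a2 * (⟨x0, y0⟩ : ℂ) + 3 * a3 * (⟨x0, y0⟩ : ℂ) ^ 2 := by
    linear_combination -ex
  have hHt : Ht = -(b0 + b1 * (⟨x0, y0⟩ : ℂ)) := by linear_combination et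
  have hq0 : a2 + 2 * x0 * a3 = a2 + 2 * x0 * a3 := rfl
  refine ⟨a0 - r * (a2 + 2 * x0 * a3), a1 + 2 * x0 * (a2 + 2 * x0 * a3) - r * a3,
    a2 + 2 * x0 * a3, a3, ?_, ?_, ?_, ?_, ?_, ?_, ?_, ?_, ?_, ?_⟩
  · rw [hHt]; simp; field_simp
  · rw [hHt]; simp
  · rw [hw0, hr]; simp [pow_succ]; field_simp; ring
  · rw [hw0, hr]; simp [pow_succ]; ring
  · rw [hw1]; simp [pow_succ]; field_simp; ring
  · rw [hw1, hr]; simp [pow_succ]; field_simp; ring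
  · ring
  · ring
  · ring
  · ring

/-- The parameter space of the forms with a nonreal singular point. -/
abbrev Par (d : ℕ) : Type := ({m : Idx d // ¬ Sol m} → ℝ) × (Fin 5 → ℝ)

theorem card_par (hd : 3 ≤ d) : Module.finrank ℝ (Par d) < Module.finrank ℝ (Idx d → ℝ) := by
  rw [Module.finrank_prod, Module.finrank_fintype_fun_eq_card, Module.finrank_fintype_fun_eq_card,
    Module.finrank_fintype_fun_eq_card, Fintype.card_fin]
  have h1 : Fintype.card {m : Idx d // ¬ Sol m} =
      Fintype.card (Idx d) - Fintype.card {m : Idx d // Sol m} :=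
    Fintype.card_subtype_compl _
  have h2 : Fintype.card {m : Idx d // Sol m} ≤ Fintype.card (Idx d) := Fintype.card_subtype_le _
  have h3 : Fintype.card (Fin 6) ≤ Fintype.card {m : Idx d // Sol m} := by
    let I : Fin 6 → ℕ := ![0, 0, 0, 0, 1, 1]
    let J : Fin 6 → ℕ := ![0, 1, 2, 3, 0, 1]
    have hIJ : ∀ k, I k + J k ≤ d := by
      intro k
      have : I k + J k ≤ 3 := by revert k; decide
      omega
    refine Fintype.card_le_of_injective
      (fun k => ⟨mk (I k) (J k) (hIJ k), ?_⟩) ?_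
    · unfold Sol
      rw [mk_zero, mk_one]
      revert k; decide
    · intro k l hkl
      have h := congrArg Subtype.val hkl
      have h0 : I k = I l := by
        have := congrArg (fun m : Idx d => m.1 0) h
        simpa only [mk_zero] using this
      have h1 : J k = J l := by
        have := congrArg (fun m : Idx d => m.1 1) h
        simpa only [mk_one] using this
      have key : ∀ k l : Fin 6, I k = I l → J k = J l → k = l := by decide
      exact key k l h0 h1
  rw [Fintype.card_fin] at h3
  omega


/-- First coordinate. -/
noncomputable def uF (v : Par d) : ℂ := (v.2 0 : ℂ) + (v.2 1 : ℂ) * Complex.I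

/-- Second coordinate. -/
noncomputable def zF (v : Par d) : ℂ := (v.2 2 : ℂ) + (Real.exp (v.2 3) : ℂ) * Complex.I

theorem cd_of {f : Par d → ℝ} (h : ContDiff ℝ 1 f) : ContDiff ℝ 1 fun v => ((f v : ℝ) : ℂ) :=
  Complex.ofRealCLM.contDiff.comp h

theorem cd_re {f : Par d → ℂ} (h : ContDiff ℝ 1 f) : ContDiff ℝ 1 fun v => (f v).re :=
  Complex.reCLM.contDiff.comp h

theorem cd_im {f : Par d → ℂ} (h : ContDiff ℝ 1 f) : ContDiff ℝ 1 fun v => (f v).im :=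
  Complex.imCLM.contDiff.comp h

theorem cd_coord (k : Fin 5) : ContDiff ℝ 1 fun v : Par d => v.2 k :=
  (contDiff_apply ℝ ℝ k).comp contDiff_snd

theorem cd_u : ContDiff ℝ 1 (uF (d := d)) :=
  (cd_of (cd_coord 0)).add ((cd_of (cd_coord 1)).mul contDiff_const)

theorem cd_z : ContDiff ℝ 1 (zF (d := d)) :=
  (cd_of (cd_coord 2)).add ((cd_of (Real.contDiff_exp.comp (cd_coord 3))).mul contDiff_const)

theorem cd_ext0 (m : Idx d) : ContDiff ℝ 1 fun v : Par d => ((ext0 v.1 m : ℝ) : ℂ) := by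
  apply cd_of
  unfold ext0
  by_cases h : ¬ Sol m
  · simp only [h, not_false_eq_true, dite_true]
    exact (contDiff_apply ℝ ℝ (⟨m, h⟩ : {m : Idx d // ¬ Sol m})).comp contDiff_fst
  · simp only [h, dite_false]
    exact contDiff_const

/-- Value of the free part. -/
noncomputable def HF (v : Par d) : ℂ := ev (ext0 v.1) (uF v) (zF v) 1

/-- Derivative of the free part. -/
noncomputable def HtF (v : Par d) : ℂ := evt (ext0 v.1) (uF v) (zF v) 1

/-- Derivative of the free part. -/
noncomputable def HxF (v : Par d) : ℂ := evx (ext0 v.1) (uF v) (zF v) 1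

theorem cd_H : ContDiff ℝ 1 (HF (d := d)) := by
  unfold HF ev
  have h1 := cd_u (d := d)
  have h2 := cd_z (d := d)
  have h3 := cd_ext0 (d := d)
  fun_prop

theorem cd_Ht : ContDiff ℝ 1 (HtF (d := d)) := by
  unfold HtF evt
  have h1 := cd_u (d := d)
  have h2 := cd_z (d := d)
  have h3 := cd_ext0 (d := d)
  fun_prop

theorem cd_Hx : ContDiff ℝ 1 (HxF (d := d)) := by
  unfold HxF evx
  have h1 := cd_u (d := d)
  have h2 := cd_z (d := d)
  have h3 := cd_ext0 (d := d)
  fun_prop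

/-- Solved coefficient. -/
noncomputable def b1F (v : Par d) : ℝ := -(HtF v).im * Real.exp (-v.2 3)
/-- Solved coefficient. -/
noncomputable def b0F (v : Par d) : ℝ := -(HtF v).re - b1F v * v.2 2
/-- Auxiliary coefficient. -/
noncomputable def p1F (v : Par d) : ℝ := (-HF v + uF v * HtF v).im * Real.exp (-v.2 3)
/-- Auxiliary coefficient. -/
noncomputable def p0F (v : Par d) : ℝ := (-HF v + uF v * HtF v).re - p1F v * v.2 2
/-- Auxiliary coefficient. -/
noncomputable def q1F (v : Par d) : ℝ :=
  -(((-HxF v - uF v * (b1F v : ℂ)).re - p1F v) * Real.exp (-v.2 3) / 2) * Real.exp (-v.2 3)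
/-- Auxiliary coefficient. -/
noncomputable def q0F (v : Par d) : ℝ :=
  (-HxF v - uF v * (b1F v : ℂ)).im * Real.exp (-v.2 3) / 2 - q1F v * v.2 2
/-- Auxiliary quantity. -/
noncomputable def rF (v : Par d) : ℝ := v.2 2 ^ 2 + Real.exp (v.2 3) ^ 2

theorem cd_exp : ContDiff ℝ 1 fun v : Par d => Real.exp (-v.2 3) :=
  Real.contDiff_exp.comp (cd_coord 3).neg

theorem cd_b1 : ContDiff ℝ 1 (b1F (d := d)) := (cd_im cd_Ht).neg.mul cd_exp

theorem cd_b0 : ContDiff ℝ 1 (b0F (d := d)) :=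
  (cd_re cd_Ht).neg.sub (cd_b1.mul (cd_coord 2))

theorem cd_p1 : ContDiff ℝ 1 (p1F (d := d)) :=
  (cd_im (cd_H.neg.add (cd_u.mul cd_Ht))).mul cd_exp

theorem cd_p0 : ContDiff ℝ 1 (p0F (d := d)) :=
  (cd_re (cd_H.neg.add (cd_u.mul cd_Ht))).sub (cd_p1.mul (cd_coord 2))

theorem cd_w1 : ContDiff ℝ 1 fun v : Par d => -HxF v - uF v * (b1F v : ℂ) :=
  cd_Hx.neg.sub (cd_u.mul (cd_of cd_b1))

theorem cd_q1 : ContDiff ℝ 1 (q1F (d := d)) :=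
  ((((cd_re cd_w1).sub cd_p1).mul cd_exp).div_const 2).neg.mul cd_exp

theorem cd_q0 : ContDiff ℝ 1 (q0F (d := d)) :=
  (((cd_im cd_w1).mul cd_exp).div_const 2).sub (cd_q1.mul (cd_coord 2))

theorem cd_r : ContDiff ℝ 1 (rF (d := d)) :=
  ((cd_coord 2).pow 2).add ((Real.contDiff_exp.comp (cd_coord 3)).pow 2)

/-- The parametrized bad form. -/
noncomputable def badF (v : Par d) : Idx d → ℝ :=
  asm v.1 (p0F v + rF v * q0F v) (p1F v - 2 * v.2 2 * q0F v + rF v * q1F v)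
    (q0F v - 2 * v.2 2 * q1F v) (q1F v) (b0F v) (b1F v)

/-- The rescaled bad form. -/
noncomputable def parF (f0 : Idx d → ℝ) (v : Par d) : Idx d → ℝ :=
  f0 + Real.exp (v.2 4) • (badF v - f0)

theorem cd_bad : ContDiff ℝ 1 (badF (d := d)) := by
  have h3 : ContDiff ℝ 1 fun v : Par d => ext0 v.1 := by
    rw [contDiff_pi]
    intro m
    exact cd_re (cd_ext0 m)
  have h0 := cd_p0 (d := d)
  have h1 := cd_p1 (d := d)
  have h2 := cd_q0 (d := d)
  have h4 := cd_q1 (d := d)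
  have h5 := cd_b0 (d := d)
  have h6 := cd_b1 (d := d)
  have h7 := cd_r (d := d)
  have h8 := cd_coord (d := d) 2
  unfold badF asm
  fun_prop

theorem cd_par (f0 : Idx d → ℝ) : ContDiff ℝ 1 (parF f0) :=
  contDiff_const.add ((Real.contDiff_exp.comp (cd_coord 4)).smul (cd_bad.sub contDiff_const))

theorem bad_mem (hd : 3 ≤ d) {b : Idx d → ℝ} (hb : Bad b) (ρ : ℝ) :
    ∃ v : Par d, badF v = b ∧ v.2 4 = ρ := by
  obtain ⟨u, z, hz, e0, et, ex⟩ := hb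
  obtain ⟨c, a0, a1, a2, a3, b0, b1, rfl⟩ := exists_asm hd b
  obtain ⟨v, hv1, hv⟩ : ∃ v : Par d, v.1 = c ∧ v.2 = ![u.re, u.im, z.re, Real.log z.im, ρ] :=
    ⟨⟨c, ![u.re, u.im, z.re, Real.log z.im, ρ]⟩, rfl, rfl⟩
  have v2 : v.2 2 = z.re := by rw [hv]; rfl
  have v3' : v.2 3 = Real.log z.im := by rw [hv]; rfl
  have v3 : Real.exp (v.2 3) = z.im := by rw [v3', Real.exp_log hz]
  have v3n : Real.exp (-v.2 3) = z.im⁻¹ := by rw [Real.exp_neg, v3]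
  have v4 : v.2 4 = ρ := by rw [hv]; rfl
  have hu : uF v = u := by
    have h0 : v.2 0 = u.re := by rw [hv]; rfl
    have h1 : v.2 1 = u.im := by rw [hv]; rfl
    rw [uF, h0, h1, Complex.re_add_im]
  have hzF : zF v = z := by rw [zF, v2, v3, Complex.re_add_im]
  have hH : HF v = ev (ext0 c) u z 1 := by rw [HF, hv1, hu, hzF]
  have hHt : HtF v = evt (ext0 c) u z 1 := by rw [HtF, hv1, hu, hzF]
  have hHx : HxF v = evx (ext0 c) u z 1 := by rw [HxF, hv1, hu, hzF]
  refine ⟨v, ?_, v4⟩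
  obtain ⟨p0, p1, q0, q1, s1, s2, s3, s4, s5, s6, s7, s8, s9, s10⟩ :=
    solve6 (u := u) (H := HF v) (Ht := HtF v) (Hx := HxF v) (x0 := z.re) (y0 := z.im)
      (a0 := a0) (a1 := a1) (a2 := a2) (a3 := a3) (b0 := b0) (b1 := b1) hz.ne'
      (by
        rw [hH, ← e0]
        simp only [asm, evc_add, evc_smul]
        rw [ev_mon _ _ (by omega), ev_mon _ _ (by omega), ev_mon _ _ (by omega),
          ev_mon _ _ (by omega), ev_mon _ _ (by omega), ev_mon _ _ (by omega)]
        simp only [Complex.eta]; ring)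
      (by
        rw [hHt, ← et]
        simp only [asm, evt_add, evt_smul]
        rw [evt_mon _ _ (by omega), evt_mon _ _ (by omega), evt_mon _ _ (by omega),
          evt_mon _ _ (by omega), evt_mon _ _ (by omega), evt_mon _ _ (by omega)]
        simp [Complex.eta]; ring)
      (by
        rw [hHx, ← ex]
        simp only [asm, evx_add, evx_smul]
        rw [evx_mon _ _ (by omega), evx_mon _ _ (by omega), evx_mon _ _ (by omega),
          evx_mon _ _ (by omega), evx_mon _ _ (by omega), evx_mon _ _ (by omega)]
        simp [Complex.eta]; ring)
  have t1 : b1F v = b1 := by rw [b1F, v3n, s1]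
  have t2 : b0F v = b0 := by rw [b0F, t1, v2, s2]
  have t3 : p1F v = p1 := by rw [p1F, hu, v3n, s3]
  have t4 : p0F v = p0 := by rw [p0F, hu, t3, v2, s4]
  have t5 : q1F v = q1 := by rw [q1F, hu, t1, t3, v3n, s6]
  have t6 : q0F v = q0 := by rw [q0F, hu, t1, t5, v3n, v2]; linarith
  have t7 : rF v = z.re ^ 2 + z.im ^ 2 := by rw [rF, v2, v3]
  rw [badF, t1, t2, t3, t4, t5, t6, t7, v2, hv1, ← s7, ← s8, ← s9, ← s10]

theorem dense3 (hd : 3 ≤ d) (f0 : Idx d → ℝ) :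
    Dense {g : Idx d → ℝ | ∀ σ : ℝ, 0 < σ → ¬ Bad ((1 - σ) • f0 + σ • g)} := by
  refine ((cd_par f0).dense_compl_range_of_finrank_lt_finrank (card_par hd)).mono ?_
  intro g hg σ hσ hb
  apply hg
  obtain ⟨v, hv, h4⟩ := bad_mem hd hb (-Real.log σ)
  refine ⟨v, ?_⟩
  rw [parF, hv, h4, Real.exp_neg, Real.exp_log hσ]
  funext m
  simp only [Pi.add_apply, Pi.smul_apply, Pi.sub_apply, smul_eq_mul]
  field_simp
  ring

theorem not_bad_one {c : Idx 1 → ℝ} (hc : HypS c) : ¬ Bad c := by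
  rintro ⟨u, z, hz, -, et, -⟩
  apply hc.1.ne'
  have h : evt c u z 1 = ((evR c 1 0 0 : ℝ) : ℂ) := by
    unfold evt evR
    rw [Complex.ofReal_sum]
    refine Finset.sum_congr rfl fun m _ => ?_
    have := idx_sum m
    generalize m.1 0 = i at *
    generalize m.1 1 = j at *
    generalize m.1 2 = k at *
    have hi : i ≤ 1 := by omega
    interval_cases i
    · have hjk : j ≠ 0 ∨ k ≠ 0 := by omega
      rcases hjk with h | h <;> simp [h]
    · have : j = 0 := by omega
      have : k = 0 := by omega
      subst j; subst k; simp
  rw [h] at et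
  exact_mod_cast et

theorem not_bad_two {c : Idx 2 → ℝ} (hc : HypS c) : ¬ Bad c := by
  rintro ⟨u, z, hz, e0, et, ex⟩
  have h1 : evt c u.im z.im 0 = ((evt c u z 1).im : ℂ) := by
    unfold evt
    rw [Complex.im_sum, Complex.ofReal_sum]
    refine Finset.sum_congr rfl fun m _ => ?_
    have := idx_sum m
    generalize m.1 0 = i at *
    generalize m.1 1 = j at *
    generalize m.1 2 = k at *
    have hi : i ≤ 2 := by omega
    have hj : j ≤ 2 := by omega
    have hk : k = 2 - i - j := by omega
    subst k
    interval_cases i <;> interval_cases j <;> first | omega | simp [pow_succ]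
  have h2 : evx c u.im z.im 0 = ((evx c u z 1).im : ℂ) := by
    unfold evx
    rw [Complex.im_sum, Complex.ofReal_sum]
    refine Finset.sum_congr rfl fun m _ => ?_
    have := idx_sum m
    generalize m.1 0 = i at *
    generalize m.1 1 = j at *
    generalize m.1 2 = k at *
    have hi : i ≤ 2 := by omega
    have hj : j ≤ 2 := by omega
    have hk : k = 2 - i - j := by omega
    subst k
    interval_cases i <;> interval_cases j <;> first | omega | simp [pow_succ]
  have h3 : 2 * ev c u.im z.im 0 = u.im * evt c u.im z.im 0 + z.im * evx c u.im z.im 0 := by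
    unfold ev evt evx
    rw [Finset.mul_sum, Finset.mul_sum, Finset.mul_sum, ← Finset.sum_add_distrib]
    refine Finset.sum_congr rfl fun m _ => ?_
    have := idx_sum m
    generalize m.1 0 = i at *
    generalize m.1 1 = j at *
    generalize m.1 2 = k at *
    have hi : i ≤ 2 := by omega
    have hj : j ≤ 2 := by omega
    have hk : k = 2 - i - j := by omega
    subst k
    interval_cases i <;> interval_cases j <;> first | omega | (simp [pow_succ]; try ring)
  rw [et] at h1
  rw [ex] at h2
  simp only [Complex.zero_im, Complex.ofReal_zero] at h1 h2
  have h4 : ev c u.im z.im 0 = 0 := by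
    rw [h1, h2] at h3
    simpa using h3
  have h5 := hc.2 u.im z.im 0 (Or.inr (Or.inl hz.ne'))
  apply h5
  rw [Complex.conj_ofReal, evD_self]
  exact ⟨by simpa using h4, by simpa using h1⟩

/-- Generic segments avoid the bad forms. -/
theorem dense_good (hd : 0 < d) (f0 : Idx d → ℝ) :
    Dense {g : Idx d → ℝ | ∀ σ : ℝ, 0 < σ → HypS ((1 - σ) • f0 + σ • g) →
      ¬ Bad ((1 - σ) • f0 + σ • g)} := by
  by_cases h : 3 ≤ d
  · refine (dense3 h f0).mono ?_
    intro g hg σ hσ _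
    exact hg σ hσ
  · have : {g : Idx d → ℝ | ∀ σ : ℝ, 0 < σ → HypS ((1 - σ) • f0 + σ • g) →
      ¬ Bad ((1 - σ) • f0 + σ • g)} = Set.univ := by
      apply Set.eq_univ_of_forall
      intro g σ _ hS
      have : d = 1 ∨ d = 2 := by omega
      rcases this with rfl | rfl
      · exact not_bad_one hS
      · exact not_bad_two hS
    rw [this]
    exact dense_univ

end HV

namespace HV

open Matrix

variable {d n : ℕ}

theorem local_fill {U : Set (Idx (n + 1) → ℝ)} (hUo : IsOpen U) (hUc : Convex ℝ U)
    (hUS : ∀ c ∈ U, HypS c) {f0 : Idx (n + 1) → ℝ} (hf : f0 ∈ U) (h0 : Im (n + 1) ∈ nhds f0) :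
    U ⊆ Im (n + 1) := by
  have hD := dense_good (Nat.succ_pos n) f0
  set D := {g : Idx (n + 1) → ℝ | ∀ σ : ℝ, 0 < σ → HypS ((1 - σ) • f0 + σ • g) →
      ¬ Bad ((1 - σ) • f0 + σ • g)} with hDdef
  have key : ∀ g ∈ U ∩ D, g ∈ Im (n + 1) := by
    rintro g ⟨hgU, hgD⟩
    let F : ℝ → (Idx (n + 1) → ℝ) := fun σ => (1 - σ) • f0 + σ • g
    have hF : Continuous F := by fun_prop
    have hFU : ∀ σ ∈ Set.Icc (0 : ℝ) 1, F σ ∈ U := fun σ hσ =>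
      hUc hf hgU (by linarith [hσ.2]) hσ.1 (by ring)
    have hcl : IsClosed ({σ | F σ ∈ Im (n + 1)} ∩ Set.Icc (0 : ℝ) 1) := by
      apply isClosed_of_closure_subset
      intro x hx
      have hx2 : x ∈ Set.Icc (0 : ℝ) 1 :=
        isClosed_Icc.closure_subset (closure_mono Set.inter_subset_right hx)
      refine ⟨?_, hx2⟩
      have hx1 : F x ∈ closure (Im (n + 1)) :=
        map_mem_closure hF (closure_mono Set.inter_subset_left hx) fun σ hσ => hσ
      exact im_closed hx1 (hUS _ (hFU x hx2)).1
    have h1 : (1 : ℝ) ∈ {σ | F σ ∈ Im (n + 1)} := by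
      refine hcl.mem_of_ge_of_forall_exists_gt ?_ zero_le_one ?_
      · have : F 0 = f0 := by simp [F]
        change F 0 ∈ Im (n + 1)
        rw [this]; exact mem_of_mem_nhds h0
      · rintro x ⟨hxI, hx0, hx1⟩
        have hn : Im (n + 1) ∈ nhds (F x) := by
          rcases hx0.eq_or_lt with h | h
          · have : F x = f0 := by simp [F, ← h]
            rw [this]; exact h0
          · have hS := hUS _ (hFU x ⟨hx0, hx1.le⟩)
            exact im_open_at hxI hS (hgD x h hS)
        have hn2 : {σ | F σ ∈ Im (n + 1)} ∈ nhds x := hF.continuousAt hn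
        exact Filter.nonempty_of_mem
          (Filter.inter_mem (mem_nhdsWithin_of_mem_nhds hn2) (Ioc_mem_nhdsGT hx1))
    have : F 1 = g := by simp [F]
    rw [← this]; exact h1
  intro g hg
  exact im_closed (closure_mono key (hD.open_subset_closure_inter hUo hg)) (hUS g hg).1

theorem path_fill {g : Idx (n + 1) → ℝ} (hg : Hyp g) {s1 : ℝ} (hs1 : s1 < 1)
    (h1 : Im (n + 1) ∈ nhds (gam g s1)) {s : ℝ} (hs : s < 1) : Im (n + 1) ∈ nhds (gam g s) := by
  have hT : IsOpen {s : ℝ | Im (n + 1) ∈ nhds (gam g s)} := by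
    have : {s : ℝ | Im (n + 1) ∈ nhds (gam g s)} = gam g ⁻¹' interior (Im (n + 1)) := by
      ext s; exact mem_interior_iff_mem_nhds.symm
    rw [this]
    exact isOpen_interior.preimage (gam_cont g)
  have hsub : Set.Iio (1 : ℝ) ⊆ {s : ℝ | Im (n + 1) ∈ nhds (gam g s)} := by
    refine isPreconnected_Iio.subset_of_closure_inter_subset hT ⟨s1, hs1, h1⟩ ?_
    rintro x ⟨hx, hx1⟩
    have hS := gam_hyp hg (ne_of_lt hx1)
    obtain ⟨ε, hε, hb⟩ := Metric.isOpen_iff.1 HypS_open _ hS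
    have hV : gam g ⁻¹' Metric.ball (gam g x) ε ∈ nhds x :=
      (gam_cont g).continuousAt (Metric.ball_mem_nhds _ hε)
    obtain ⟨y, hy1, hy2⟩ := mem_closure_iff_nhds.1 hx _ hV
    have := local_fill Metric.isOpen_ball (convex_ball _ _) (fun c hc => hb hc) hy1 hy2
    exact Filter.mem_of_superset (Metric.ball_mem_nhds _ hε) this
  exact hsub hs

/-- The diagonal matrix of the Jacobi pair. -/
noncomputable def JA (n : ℕ) : Matrix (Fin (n + 1)) (Fin (n + 1)) ℝ :=
  Matrix.diagonal fun i => (i.val : ℝ)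

/-- The off-diagonal matrix of the Jacobi pair. -/
noncomputable def JB (n : ℕ) : Matrix (Fin (n + 1)) (Fin (n + 1)) ℝ :=
  Matrix.of fun i j => if i.val + 1 = j.val ∨ j.val + 1 = i.val then 1 else 0

theorem JA_symm : (JA n)ᵀ = JA n := by simp [JA]

theorem JB_symm : (JB n)ᵀ = JB n := by
  ext i j; simp [JB, or_comm]

theorem J_pencil : PencilK ((JA n).map Complex.ofReal) ((JB n).map Complex.ofReal) := by
  intro t x y hxy v w hv hw hv0
  set M := t • (1 : Matrix (Fin (n + 1)) (Fin (n + 1)) ℂ) + x • (JA n).map Complex.ofReal +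
    y • (JB n).map Complex.ofReal with hM
  by_cases hy : y = 0
  · have hx : x ≠ 0 := by
      rcases hxy with h | h
      · exact h
      · exact absurd hy h
    have hdiag : M = Matrix.diagonal fun i => t + x * (i.val : ℂ) := by
      ext i j
      by_cases hij : i = j
      · subst hij; simp [hM, hy, JA]
      · simp [hM, hy, JA, hij]
    have hk : ∀ v : Fin (n + 1) → ℂ, M *ᵥ v = 0 → ∀ i, (t + x * (i.val : ℂ)) * v i = 0 := by
      intro v hv i
      have := congrFun hv i
      rwa [hdiag, Matrix.mulVec_diagonal] at this
    obtain ⟨k, hk0⟩ : ∃ k, v k ≠ 0 := by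
      by_contra h
      push Not at h
      exact hv0 (funext h)
    have ht : t + x * (k.val : ℂ) = 0 := by
      rcases mul_eq_zero.1 (hk v hv k) with h | h
      · exact h
      · exact absurd h hk0
    have hz : ∀ v : Fin (n + 1) → ℂ, M *ᵥ v = 0 → ∀ i, i ≠ k → v i = 0 := by
      intro v hv i hik
      rcases mul_eq_zero.1 (hk v hv i) with h | h
      · exfalso
        have h2 : x * ((i.val : ℂ) - k.val) = 0 := by linear_combination h - ht
        rcases mul_eq_zero.1 h2 with h3 | h3
        · exact hx h3
        · apply hik
          apply Fin.ext
          exact_mod_cast sub_eq_zero.1 h3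
      · exact h
    refine ⟨w k / v k, ?_⟩
    funext i
    by_cases hi : i = k
    · subst hi; simp [hk0]
    · simp [hz v hv i hi, hz w hw i hi]
  · have key : ∀ v : Fin (n + 1) → ℂ, M *ᵥ v = 0 → v 0 = 0 → v = 0 := by
      intro v hv h0
      have hrec : ∀ m : ℕ, ∀ j : Fin (n + 1), j.val ≤ m → v j = 0 := by
        intro m
        induction m with
        | zero =>
          intro j hj
          have : j = 0 := Fin.ext (by simpa using hj)
          rw [this, h0]
        | succ m ih =>
          intro j hj
          rcases Nat.lt_or_ge j.val (m + 1) with h | h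
          · exact ih j (by omega)
          · have hjm : j.val = m + 1 := by omega
            have hmn : m < n + 1 := by have := j.isLt; omega
            have hr := congrFun hv ⟨m, hmn⟩
            rw [Matrix.mulVec, dotProduct, Finset.sum_eq_single j] at hr
            · have hne : (⟨m, hmn⟩ : Fin (n + 1)) ≠ j := by
                intro h; rw [← h] at hjm; simp at hjm
              simp [hM, JA, JB, hne, hjm, hy] at hr
              exact hr
            · intro b _ hb
              rcases Nat.lt_or_ge m b.val with h | h
              · have hne : (⟨m, hmn⟩ : Fin (n + 1)) ≠ b := by
                  intro h'; rw [← h'] at h; simp at h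
                have hb2 : b.val ≠ j.val := fun h => hb (Fin.ext h)
                have h3 : ¬ (m + 1 = b.val ∨ b.val + 1 = m) := by omega
                simp [hM, JA, JB, hne, h3]
              · rw [ih b h, mul_zero]
            · simp
      funext j
      exact hrec j.val j le_rfl
    have hv00 : v 0 ≠ 0 := fun h => hv0 (key v hv h)
    refine ⟨w 0 / v 0, ?_⟩
    have h1 := key (w - (w 0 / v 0) • v)
      (by rw [Matrix.mulVec_sub, Matrix.mulVec_smul, hv, hw]; simp)
      (by simp [hv00])
    exact sub_eq_zero.1 h1

theorem det_hyp {a : ℝ} (ha : 0 < a) {A B : Matrix (Fin d) (Fin d) ℝ} (hA : Aᵀ = A) (hB : Bᵀ = B)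
    {c : Idx d → ℝ} (h : ∀ t x y : ℂ, ev c t x y = a * (Mc A B t x y).det) : Hyp c := by
  refine ⟨by rw [lead_det (real_of_complex_det h)]; exact ha, ?_⟩
  intro x y t h0 _
  rw [h] at h0
  have hdet : (Mc A B t x y).det = 0 := by
    rcases mul_eq_zero.1 h0 with h1 | h1
    · exact absurd (by exact_mod_cast h1) ha.ne'
    · exact h1
  obtain ⟨v, hv0, hv⟩ := Matrix.exists_mulVec_eq_zero_iff.2 hdet
  let H : Matrix (Fin d) (Fin d) ℂ := (x : ℂ) • A.map Complex.ofReal + (y : ℂ) • B.map Complex.ofReal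
  have hH : H.IsHermitian := by
    ext i j
    have h1 : A j i = A i j := congrFun (congrFun hA i) j
    have h2 : B j i = B i j := congrFun (congrFun hB i) j
    simp [H, Matrix.conjTranspose_apply, h1, h2]
  have hMv : t • v + H *ᵥ v = 0 := by
    have : Mc A B t x y = t • 1 + H := by simp only [Mc, H]; rw [add_assoc]
    rw [this, Matrix.add_mulVec, Matrix.smul_mulVec, Matrix.one_mulVec] at hv
    exact hv
  have h1 := congrArg (fun w => star v ⬝ᵥ w) hMv
  simp only [dotProduct_add, dotProduct_smul, dotProduct_zero, smul_eq_mul] at h1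
  have h2 := hH.im_star_dotProduct_mulVec_self v
  have h3 : star v ⬝ᵥ v = ((∑ i, Complex.normSq (v i) : ℝ) : ℂ) := by
    simp only [dotProduct, Complex.ofReal_sum, Pi.star_apply]
    refine Finset.sum_congr rfl fun i _ => ?_
    rw [Complex.normSq_eq_conj_mul_self]; rfl
  have h4 : (∑ i, Complex.normSq (v i)) ≠ 0 := by
    intro h
    apply hv0
    funext i
    have := (Finset.sum_eq_zero_iff_of_nonneg (fun i _ => Complex.normSq_nonneg (v i))).1 h i
      (Finset.mem_univ i)
    exact Complex.normSq_eq_zero.1 this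
  rw [h3] at h1
  have h5 := congrArg Complex.im h1
  rw [Complex.add_im, Complex.im_mul_ofReal] at h5
  have h6 : (star v ⬝ᵥ H *ᵥ v).im = 0 := h2
  rw [h6] at h5
  simp at h5
  rcases h5 with h5 | h5
  · exact h5
  · exact absurd h5 h4

/-- Every hyperbolic form has a determinantal representation. -/
theorem hyp_mem {g : Idx (n + 1) → ℝ} (hg : Hyp g) : g ∈ Im (n + 1) := by
  obtain ⟨f, hf⟩ := exists_det (evR g 1 0 0) (JA n) (JB n)
  have hfH : Hyp f := det_hyp hg.1 JA_symm JB_symm hf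
  have hfn : Im (n + 1) ∈ nhds f := im_nhds JA_symm JB_symm J_pencil hg.1.ne'
    (real_of_complex_det hf)
  have hlead : evR g 1 0 0 = evR f 1 0 0 := (lead_det (real_of_complex_det hf)).symm
  have hev : ∀ᶠ s in nhds (1 : ℝ), Im (n + 1) ∈ nhds (gam f s) := by
    have h1 : Filter.Tendsto (gam f) (nhds 1) (nhds f) := by
      have := (gam_cont f).tendsto 1
      rwa [gam_one] at this
    exact h1.eventually (eventually_mem_nhds_iff.2 hfn)
  obtain ⟨s1, hs1, hs1'⟩ : ∃ s1 : ℝ, Im (n + 1) ∈ nhds (gam f s1) ∧ s1 < 1 := by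
    have h2 : ∀ᶠ s in nhdsWithin (1 : ℝ) (Set.Iio 1), Im (n + 1) ∈ nhds (gam f s) ∧ s < 1 :=
      (hev.filter_mono nhdsWithin_le_nhds).and self_mem_nhdsWithin
    exact h2.exists
  have h0 := path_fill hfH hs1' hs1 (s := 0) zero_lt_one
  rw [← gam_zero hlead] at h0
  refine im_closed ?_ hg.1
  have h1 : Filter.Tendsto (gam g) (nhdsWithin 1 (Set.Iio 1)) (nhds g) := by
    have := (gam_cont g).tendsto 1
    rw [gam_one] at this
    exact this.mono_left nhdsWithin_le_nhds
  refine mem_closure_of_tendsto h1 ?_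
  filter_upwards [self_mem_nhdsWithin] with s hs
  exact mem_of_mem_nhds (path_fill hg zero_lt_one h0 hs)

end HV

namespace HV

open Matrix

variable {d n : ℕ}

/-- Homogenization with respect to degree `d`. -/
noncomputable def PH (p : MvPolynomial (Fin 2) ℝ) (d : ℕ) (X Y Z : ℂ) : ℂ :=
  ∑ m ∈ p.support, ((p.coeff m : ℝ) : ℂ) * (X ^ m 0 * Y ^ m 1 * Z ^ (d - m 0 - m 1))

theorem supp_le {p : MvPolynomial (Fin 2) ℝ} (hd : p.totalDegree = d) {m : Fin 2 →₀ ℕ}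
    (hm : m ∈ p.support) : m 0 + m 1 ≤ d := by
  have := MvPolynomial.le_totalDegree hm
  rw [hd, Finsupp.sum_fintype _ _ (by simp)] at this
  simpa [Fin.sum_univ_two] using this

theorem PH_smul {p : MvPolynomial (Fin 2) ℝ} (hd : p.totalDegree = d) (l X Y Z : ℂ) :
    PH p d (l * X) (l * Y) (l * Z) = l ^ d * PH p d X Y Z := by
  unfold PH
  rw [Finset.mul_sum]
  refine Finset.sum_congr rfl fun m hm => ?_
  have h := supp_le hd hm
  have h2 : l ^ d = l ^ m 0 * l ^ m 1 * l ^ (d - m 0 - m 1) := by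
    rw [← pow_add, ← pow_add]; congr 1; omega
  rw [h2]; ring

theorem PH_one (p : MvPolynomial (Fin 2) ℝ) (d : ℕ) (X Y : ℂ) :
    PH p d X Y 1 = MvPolynomial.aeval ![X, Y] p := by
  rw [MvPolynomial.aeval_def, MvPolynomial.eval₂_eq']
  simp [PH, Fin.prod_univ_two]

theorem PH_conj (p : MvPolynomial (Fin 2) ℝ) (d : ℕ) (X Y Z : ℂ) :
    PH p d (starRingEnd ℂ X) (starRingEnd ℂ Y) (starRingEnd ℂ Z) = starRingEnd ℂ (PH p d X Y Z) := by
  simp [PH]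

/-- Nonvanishing on the product of upper half planes. -/
def Stab (p : MvPolynomial (Fin 2) ℝ) : Prop :=
  ∀ X Y : ℂ, 0 < X.im → 0 < Y.im → MvPolynomial.aeval ![X, Y] p ≠ 0

theorem PH_pos {p : MvPolynomial (Fin 2) ℝ} (hd : p.totalDegree = d) (hs : Stab p) {X Y : ℂ}
    (hX : 0 < X.im) (hY : 0 < Y.im) {η : ℝ} (hη : 0 < η) : PH p d X Y η ≠ 0 := by
  have h0 : (η : ℂ) ≠ 0 := by exact_mod_cast hη.ne'
  have h := PH_smul hd (η : ℂ) (((η⁻¹ : ℝ) : ℂ) * X) (((η⁻¹ : ℝ) : ℂ) * Y) 1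
  have hi : (η : ℂ) * ((η⁻¹ : ℝ) : ℂ) = 1 := by push_cast; field_simp
  rw [← mul_assoc, ← mul_assoc, hi, one_mul, one_mul, mul_one, PH_one] at h
  rw [h]
  refine mul_ne_zero (pow_ne_zero _ h0) (hs _ _ ?_ ?_)
  · rw [Complex.im_ofReal_mul]; positivity
  · rw [Complex.im_ofReal_mul]; positivity

theorem prod_bound {ζ ζ' : ℂ} (hζ : 0 < ζ.im) (s : Multiset ℂ) (hs : ∀ r ∈ s, r.im ≤ 0) :
    ‖(s.map (ζ' - ·)).prod‖ ≤
      (1 + ‖ζ' - ζ‖ / ζ.im) ^ s.card * ‖(s.map (ζ - ·)).prod‖ := by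
  induction s using Multiset.induction with
  | empty => simp
  | cons a s ih =>
    have ih' := ih fun r hr => hs r (Multiset.mem_cons_of_mem hr)
    have ha := hs a (Multiset.mem_cons_self a s)
    simp only [Multiset.map_cons, Multiset.prod_cons, norm_mul, Multiset.card_cons]
    have h1 : ζ.im ≤ ‖ζ - a‖ := by
      have h2 := Complex.abs_im_le_norm (ζ - a)
      have h3 := le_abs_self (ζ - a).im
      rw [Complex.sub_im] at h2 h3
      linarith
    have h4 : ‖ζ' - a‖ ≤ (1 + ‖ζ' - ζ‖ / ζ.im) * ‖ζ - a‖ := by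
      have h5 : ‖ζ' - a‖ ≤ ‖ζ' - ζ‖ + ‖ζ - a‖ := by
        have := norm_add_le (ζ' - ζ) (ζ - a)
        simpa using this
      have h6 : ‖ζ' - ζ‖ ≤ ‖ζ' - ζ‖ / ζ.im * ‖ζ - a‖ := by
        rw [div_mul_eq_mul_div, le_div_iff₀ hζ]
        gcongr
      linarith
    calc _ ≤ ((1 + ‖ζ' - ζ‖ / ζ.im) * ‖ζ - a‖) *
        ((1 + ‖ζ' - ζ‖ / ζ.im) ^ s.card * ‖(s.map (ζ - ·)).prod‖) := by gcongr
      _ = _ := by ring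

theorem harnack {q : Polynomial ℂ} {D : ℕ} (hD : q.natDegree ≤ D) (hr : ∀ z : ℂ, 0 < z.im → q.eval z ≠ 0)
    {ζ ζ' : ℂ} (hζ : 0 < ζ.im) :
    ‖q.eval ζ'‖ ≤ (1 + ‖ζ' - ζ‖ / ζ.im) ^ D * ‖q.eval ζ‖ := by
  have hsp : q.Splits := IsAlgClosed.splits q
  rw [hsp.eval_eq_prod_roots, hsp.eval_eq_prod_roots, norm_mul, norm_mul]
  have h1 := prod_bound (ζ' := ζ') hζ q.roots (by
    intro r hrr
    by_contra h
    push Not at h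
    exact hr r h (Polynomial.isRoot_of_mem_roots hrr))
  have h2 : (1 + ‖ζ' - ζ‖ / ζ.im) ^ q.roots.card ≤ (1 + ‖ζ' - ζ‖ / ζ.im) ^ D := by
    apply pow_le_pow_right₀
    · have : 0 ≤ ‖ζ' - ζ‖ / ζ.im := by positivity
      linarith
    · exact (Polynomial.card_roots' q).trans hD
  calc _ ≤ ‖q.leadingCoeff‖ * ((1 + ‖ζ' - ζ‖ / ζ.im) ^ D * ‖(q.roots.map (ζ - ·)).prod‖) := by
        gcongr
        refine h1.trans ?_
        gcongr
    _ = _ := by ring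

theorem lim_zero {F G : ℝ → ℂ} (hF : Continuous F) (hG : Continuous G) {C : ℝ}
    (h : ∀ η : ℝ, 0 < η → ‖F η‖ ≤ C * ‖G η‖) (h0 : G 0 = 0) : F 0 = 0 := by
  have h1 : ‖F 0‖ ≤ C * ‖G 0‖ := by
    have hf : Filter.Tendsto (fun η => ‖F η‖) (nhdsWithin 0 (Set.Ioi 0)) (nhds ‖F 0‖) :=
      (hF.norm.tendsto 0).mono_left nhdsWithin_le_nhds
    have hg : Filter.Tendsto (fun η => C * ‖G η‖) (nhdsWithin 0 (Set.Ioi 0)) (nhds (C * ‖G 0‖)) :=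
      ((continuous_const.mul hG.norm).tendsto 0).mono_left nhdsWithin_le_nhds
    refine le_of_tendsto_of_tendsto hf hg ?_
    filter_upwards [self_mem_nhdsWithin] with η hη
    exact h η hη
  rw [h0] at h1
  simpa using h1

theorem PH_cont (p : MvPolynomial (Fin 2) ℝ) (d : ℕ) (X Y : ℂ) :
    Continuous fun η : ℝ => PH p d X Y η := by
  unfold PH; fun_prop

theorem PH_X {p : MvPolynomial (Fin 2) ℝ} (hd : p.totalDegree = d) (Y Z : ℂ) :
    ∃ q : Polynomial ℂ, q.natDegree ≤ d ∧ ∀ X, q.eval X = PH p d X Y Z := by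
  refine ⟨∑ m ∈ p.support, Polynomial.C (((p.coeff m : ℝ) : ℂ) * (Y ^ m 1 * Z ^ (d - m 0 - m 1))) *
    Polynomial.X ^ m 0, ?_, ?_⟩
  · apply Polynomial.natDegree_sum_le_of_forall_le
    intro m hm
    refine (Polynomial.natDegree_C_mul_X_pow_le _ _).trans ?_
    have := supp_le hd hm
    omega
  · intro X
    rw [Polynomial.eval_finsetSum]
    refine Finset.sum_congr rfl fun m _ => ?_
    simp; ring

theorem PH_Y {p : MvPolynomial (Fin 2) ℝ} (hd : p.totalDegree = d) (X Z : ℂ) :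
    ∃ q : Polynomial ℂ, q.natDegree ≤ d ∧ ∀ Y, q.eval Y = PH p d X Y Z := by
  refine ⟨∑ m ∈ p.support, Polynomial.C (((p.coeff m : ℝ) : ℂ) * (X ^ m 0 * Z ^ (d - m 0 - m 1))) *
    Polynomial.X ^ m 1, ?_, ?_⟩
  · apply Polynomial.natDegree_sum_le_of_forall_le
    intro m hm
    refine (Polynomial.natDegree_C_mul_X_pow_le _ _).trans ?_
    have := supp_le hd hm
    omega
  · intro X
    rw [Polynomial.eval_finsetSum]
    refine Finset.sum_congr rfl fun m _ => ?_
    simp; ring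

theorem spread_X {p : MvPolynomial (Fin 2) ℝ} (hd : p.totalDegree = d) (hs : Stab p) {X Y X' : ℂ}
    (hX : 0 < X.im) (hY : 0 < Y.im) (h0 : PH p d X Y 0 = 0) : PH p d X' Y 0 = 0 := by
  have h0' : PH p d X Y ((0 : ℝ) : ℂ) = 0 := by simpa using h0
  have := lim_zero (PH_cont p d X' Y) (PH_cont p d X Y) (C := (1 + ‖X' - X‖ / X.im) ^ d) (by
    intro η hη
    obtain ⟨q, hq, he⟩ := PH_X hd Y (η : ℂ)
    rw [← he, ← he]
    exact harnack hq (fun z hz => by rw [he]; exact PH_pos hd hs hz hY hη) hX) h0'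
  simpa using this

theorem spread_Y {p : MvPolynomial (Fin 2) ℝ} (hd : p.totalDegree = d) (hs : Stab p) {X Y Y' : ℂ}
    (hX : 0 < X.im) (hY : 0 < Y.im) (h0 : PH p d X Y 0 = 0) : PH p d X Y' 0 = 0 := by
  have h0' : PH p d X Y ((0 : ℝ) : ℂ) = 0 := by simpa using h0
  have := lim_zero (PH_cont p d X Y') (PH_cont p d X Y) (C := (1 + ‖Y' - Y‖ / Y.im) ^ d) (by
    intro η hη
    obtain ⟨q, hq, he⟩ := PH_Y hd X (η : ℂ)
    rw [← he, ← he]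
    exact harnack hq (fun z hz => by rw [he]; exact PH_pos hd hs hX hz hη) hY) h0'
  simpa using this

theorem hom_eval {p : MvPolynomial (Fin 2) ℝ} (hd : p.totalDegree = d) (v : Fin 2 → ℝ) :
    ((MvPolynomial.eval v (MvPolynomial.homogeneousComponent d p) : ℝ) : ℂ) =
      PH p d (v 0) (v 1) 0 := by
  rw [MvPolynomial.homogeneousComponent_apply, map_sum, Finset.sum_filter, Complex.ofReal_sum]
  refine Finset.sum_congr rfl fun m hm => ?_
  have h := supp_le hd hm
  have hdeg : m.degree = m 0 + m 1 := by rw [Finsupp.degree_eq_sum, Fin.sum_univ_two]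
  split_ifs with h1
  · rw [hdeg] at h1
    rw [MvPolynomial.eval_monomial, Finsupp.prod_fintype _ _ (by simp), Fin.prod_univ_two,
      show d - m 0 - m 1 = 0 by omega]
    simp
  · rw [hdeg] at h1
    rw [zero_pow (by omega)]
    simp

theorem PH_zero {p : MvPolynomial (Fin 2) ℝ} (hd : p.totalDegree = d) (hp : p ≠ 0) (hs : Stab p)
    {X Y : ℂ} (hX : 0 < X.im) (hY : 0 < Y.im) : PH p d X Y 0 ≠ 0 := by
  intro h0
  have hall : ∀ a b : ℂ, 0 < a.im → PH p d a b 0 = 0 := fun a b ha =>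
    spread_Y hd hs ha hY (spread_X hd hs hX hY h0)
  have hall2 : ∀ a b : ℂ, PH p d a b 0 = 0 := by
    intro a b
    have h1 : PH p d Complex.I Complex.I 0 = 0 := hall _ _ (by simp)
    by_cases hb : 0 < b.im
    · exact spread_X hd hs (X := Complex.I) (by simp) hb (hall _ _ (by simp))
    · obtain ⟨q, -, hq⟩ := PH_Y hd a 0
      have hq0 : q = 0 := by
        apply Polynomial.eq_zero_of_infinite_isRoot
        refine Set.infinite_of_injective_forall_mem
          (f := fun k : ℕ => (k : ℂ) + Complex.I) (fun k l hkl => by simpa using hkl) ?_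
        intro k
        change q.eval _ = 0
        rw [hq]
        exact spread_X hd hs (X := Complex.I) (by simp) (by simp) (hall _ _ (by simp))
      rw [← hq, hq0]; simp
  have hc : MvPolynomial.homogeneousComponent d p = 0 := by
    apply MvPolynomial.funext
    intro v
    have := hom_eval hd v
    rw [hall2] at this
    rw [map_zero]
    exact_mod_cast this
  obtain ⟨m, hm, hm2⟩ := Finset.exists_mem_eq_sup p.support
    (MvPolynomial.support_nonempty.2 hp) (fun s => s.sum fun _ e => e)
  have hm3 : m.degree = d := by
    rw [← hd]
    exact hm2.symm
  have h2 := MvPolynomial.coeff_homogeneousComponent d p m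
  rw [hc, if_pos hm3, MvPolynomial.coeff_zero] at h2
  exact (MvPolynomial.mem_support_iff.1 hm) h2.symm

theorem PH_real {p : MvPolynomial (Fin 2) ℝ} (hd : p.totalDegree = d) (hp : p ≠ 0) (hs : Stab p)
    {X Y : ℂ} (hX : 0 < X.im) (hY : 0 < Y.im) (y : ℝ) : PH p d X Y y ≠ 0 := by
  rcases lt_trichotomy y 0 with h | h | h
  · intro h0
    have h1 := PH_smul hd (-1) X Y y
    rw [h0, mul_zero] at h1
    have h2 := PH_conj p d (-1 * X) (-1 * Y) (-1 * y)
    rw [h1, map_zero] at h2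
    have h3 : (starRingEnd ℂ) (-1 * (y : ℂ)) = ((-y : ℝ) : ℂ) := by simp
    rw [h3] at h2
    exact PH_pos hd hs (by simpa using hX) (by simpa using hY) (by linarith) h2
  · rw [h]; simpa using PH_zero hd hp hs hX hY
  · exact PH_pos hd hs hX hY h

theorem PH_quad {p : MvPolynomial (Fin 2) ℝ} (hd : p.totalDegree = d) (hp : p ≠ 0) (hs : Stab p)
    {a b : ℝ} (ha : 0 < a) (hb : 0 < b) : PH p d a b 0 ≠ 0 := by
  intro h0
  have h1 := PH_smul hd Complex.I a b 0
  rw [h0, mul_zero, mul_zero] at h1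
  exact PH_zero hd hp hs (by simpa using ha) (by simpa using hb) h1

/-- The associated ternary form. -/
theorem exists_form {p : MvPolynomial (Fin 2) ℝ} (hd : p.totalDegree = d) :
    ∃ f : Idx d → ℝ, ∀ t x y : ℂ, ev f t x y = PH p d (t + x) (t - x) y := by
  let q : MvPolynomial (Fin 3) ℝ := ∑ m ∈ p.support, MvPolynomial.C (p.coeff m) *
    ((MvPolynomial.X 0 + MvPolynomial.X 1) ^ m 0 * (MvPolynomial.X 0 - MvPolynomial.X 1) ^ m 1 *
      MvPolynomial.X 2 ^ (d - m 0 - m 1))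
  have hq : q.IsHomogeneous d := by
    refine MvPolynomial.IsHomogeneous.sum _ _ _ fun m hm => ?_
    apply MvPolynomial.IsHomogeneous.C_mul
    have h := supp_le hd hm
    have h1 : ((MvPolynomial.X 0 + MvPolynomial.X 1 : MvPolynomial (Fin 3) ℝ) ^ m 0).IsHomogeneous
        (1 * m 0) :=
      ((MvPolynomial.isHomogeneous_X ℝ 0).add (MvPolynomial.isHomogeneous_X ℝ 1)).pow _
    have h2 : ((MvPolynomial.X 0 - MvPolynomial.X 1 : MvPolynomial (Fin 3) ℝ) ^ m 1).IsHomogeneous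
        (1 * m 1) :=
      ((MvPolynomial.isHomogeneous_X ℝ 0).sub (MvPolynomial.isHomogeneous_X ℝ 1)).pow _
    have h3 : ((MvPolynomial.X 2 : MvPolynomial (Fin 3) ℝ) ^ (d - m 0 - m 1)).IsHomogeneous
        (1 * (d - m 0 - m 1)) := (MvPolynomial.isHomogeneous_X ℝ 2).pow _
    have h4 := (h1.mul h2).mul h3
    rwa [show 1 * m 0 + 1 * m 1 + 1 * (d - m 0 - m 1) = d by omega] at h4
  refine ⟨cof d q, fun t x y => ?_⟩
  rw [ev_cof hq]
  simp [q, PH]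

theorem psd_of {A : Matrix (Fin d) (Fin d) ℝ} (hA : Aᵀ = A)
    (h : ∀ l : ℝ, l < 0 → ((-l) • (1 : Matrix (Fin d) (Fin d) ℝ) + A).det ≠ 0) :
    A.PosSemidef := by
  have hH : A.IsHermitian := by
    rw [Matrix.IsHermitian, Matrix.conjTranspose_eq_transpose_of_trivial, hA]
  rw [hH.posSemidef_iff_eigenvalues_nonneg]
  intro k
  by_contra hk
  rw [Pi.zero_apply, not_le] at hk
  apply h _ hk
  rw [← Matrix.exists_mulVec_eq_zero_iff]
  refine ⟨⇑(hH.eigenvectorBasis k), ?_, ?_⟩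
  · intro h0
    have h1 := hH.eigenvectorBasis.orthonormal.ne_zero k
    apply h1
    ext i
    exact congrFun h0 i
  · rw [Matrix.add_mulVec, Matrix.smul_mulVec, Matrix.one_mulVec, hH.mulVec_eigenvectorBasis]
    simp

theorem main_pos {p : MvPolynomial (Fin 2) ℝ} (hd : p.totalDegree = n + 1) (hp : p ≠ 0)
    (hs : Stab p) :
    ∃ (A B C : Matrix (Fin (n + 1)) (Fin (n + 1)) ℝ) (c : ℝ),
      A.PosSemidef ∧ B.PosSemidef ∧ C.IsSymm ∧
      ∀ x y : ℝ, MvPolynomial.eval ![x, y] p = c * (x • A + y • B + C).det := by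
  obtain ⟨f, hf⟩ := exists_form hd
  have hfR : ∀ t x y : ℝ, ((evR f t x y : ℝ) : ℂ) = PH p (n + 1) (t + x) (t - x) y := by
    intro t x y
    rw [← ev_ofReal, hf]
  have hk : evR f 1 0 0 ≠ 0 := by
    intro h0
    have := hfR 1 0 0
    rw [h0] at this
    have h2 := PH_quad hd hp hs (a := 1) (b := 1) one_pos one_pos
    apply h2
    simpa using this.symm
  have hg : Hyp (evR f 1 0 0 • f) := by
    refine ⟨?_, ?_⟩
    · rw [evR_smul]
      exact mul_self_pos.2 hk
    · intro x y t h0 _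
      rw [evc_smul] at h0
      have h1 : ev f t x y = 0 := by
        rcases mul_eq_zero.1 h0 with h | h
        · exact absurd (by exact_mod_cast h) hk
        · exact h
      have h2 : ev f (starRingEnd ℂ t) x y = 0 := by
        have := ev_conj f t x y
        rwa [Complex.conj_ofReal, Complex.conj_ofReal, h1, map_zero] at this
      rw [hf] at h1 h2
      rcases lt_trichotomy t.im 0 with h | h | h
      · exact absurd h2 (PH_real hd hp hs (by simpa using h) (by simpa using h) y)
      · exact h
      · exact absurd h1 (PH_real hd hp hs (by simpa using h) (by simpa using h) y)
  obtain ⟨a, A, B, hA, hB, hdet⟩ := hyp_mem hg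
  simp only [evR_smul] at hdet
  have hdet0 : ∀ t x y : ℝ, (Mr A B t x y).det = 0 → evR f t x y = 0 := by
    intro t x y h
    have := hdet t x y
    rw [h, mul_zero] at this
    rcases mul_eq_zero.1 this with h | h
    · exact absurd h hk
    · exact h
  refine ⟨(1 / 2 : ℝ) • (1 + A), (1 / 2 : ℝ) • (1 - A), B, a / evR f 1 0 0, ?_, ?_, hB, ?_⟩
  · apply psd_of
    · rw [Matrix.transpose_smul, Matrix.transpose_add, Matrix.transpose_one, hA]
    · intro l hl h0
      have h1 : (-l) • (1 : Matrix (Fin (n + 1)) (Fin (n + 1)) ℝ) + (1 / 2 : ℝ) • (1 + A) =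
          Mr A B (1 / 2 - l) (1 / 2) 0 := by
        simp only [Mr]; module
      rw [h1] at h0
      have h2 := hdet0 _ _ _ h0
      have h3 := hfR (1 / 2 - l) (1 / 2) 0
      rw [h2] at h3
      refine PH_quad hd hp hs (a := 1 - l) (b := -l) (by linarith) (by linarith) ?_
      rw [Complex.ofReal_zero] at h3
      refine Eq.trans ?_ h3.symm
      congr 1 <;> push_cast <;> ring
  · apply psd_of
    · rw [Matrix.transpose_smul, Matrix.transpose_sub, Matrix.transpose_one, hA]
    · intro l hl h0
      have h1 : (-l) • (1 : Matrix (Fin (n + 1)) (Fin (n + 1)) ℝ) + (1 / 2 : ℝ) • (1 - A) =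
          Mr A B (1 / 2 - l) (-(1 / 2)) 0 := by
        simp only [Mr]; module
      rw [h1] at h0
      have h2 := hdet0 _ _ _ h0
      have h3 := hfR (1 / 2 - l) (-(1 / 2)) 0
      rw [h2] at h3
      refine PH_quad hd hp hs (a := -l) (b := 1 - l) (by linarith) (by linarith) ?_
      rw [Complex.ofReal_zero] at h3
      refine Eq.trans ?_ h3.symm
      congr 1 <;> push_cast <;> ring
  · intro x y
    have h1 : MvPolynomial.eval ![x, y] p = evR f ((x + y) / 2) ((x - y) / 2) 1 := by
      apply Complex.ofReal_injective
      rw [hfR, Complex.ofReal_one, PH_one]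
      have h2 : ![((((x + y) / 2 : ℝ) : ℂ) + (((x - y) / 2 : ℝ) : ℂ)),
          ((((x + y) / 2 : ℝ) : ℂ) - (((x - y) / 2 : ℝ) : ℂ))] = fun i => ((![x, y] i : ℝ) : ℂ) := by
        funext i
        fin_cases i
        · simp; ring
        · simp; ring
      rw [h2]
      have h3 := MvPolynomial.aeval_algebraMap_apply ℂ ![x, y] p
      have h4 : MvPolynomial.aeval ![x, y] p = MvPolynomial.eval ![x, y] p := by
        rw [← MvPolynomial.coe_aeval_eq_eval]; rfl
      rw [h4] at h3
      exact h3.symm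
    have h2 : x • ((1 / 2 : ℝ) • (1 + A)) + y • ((1 / 2 : ℝ) • (1 - A)) + B =
        Mr A B ((x + y) / 2) ((x - y) / 2) 1 := by
      simp only [Mr]; module
    rw [h1, h2]
    have h3 := hdet ((x + y) / 2) ((x - y) / 2) 1
    field_simp
    linarith

end HV

open Polynomial MvPolynomial


/-- (Helton–Vinnikov) Every bivariate real stable polynomial `p` of total degree `d` can
be written as `p(x, y) = c · det(xA + yB + C)` with `A, B` real positive semidefinite
`d × d` matrices, `C` real symmetric, and `c` a real constant. -/
theorem stmt19 (d : ℕ) (p : MvPolynomial (Fin 2) ℝ)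
    (hst : RealStable p) (hd : p.totalDegree = d) :
    ∃ (A B C : Matrix (Fin d) (Fin d) ℝ) (c : ℝ),
      A.PosSemidef ∧ B.PosSemidef ∧ C.IsSymm ∧
      ∀ x y : ℝ, MvPolynomial.eval ![x, y] p = c * (x • A + y • B + C).det := by
  rcases Nat.eq_zero_or_pos d with h0 | h0
  · subst h0
    refine ⟨0, 0, 0, p.coeff 0, Matrix.PosSemidef.zero, Matrix.PosSemidef.zero,
      Matrix.isSymm_zero, fun x y => ?_⟩
    have h1 := MvPolynomial.totalDegree_eq_zero_iff_eq_C.1 hd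
    rw [Matrix.det_fin_zero, mul_one]
    conv_lhs => rw [h1]
    exact MvPolynomial.eval_C _
  · obtain ⟨n, rfl⟩ : ∃ n, d = n + 1 := ⟨d - 1, by omega⟩
    have hp : p ≠ 0 := by
      rintro rfl
      rw [MvPolynomial.totalDegree_zero] at hd
      omega
    have hs : HV.Stab p := by
      rcases hst with h | h
      · exact absurd h hp
      · intro X Y hX hY
        refine h _ fun i => ?_
        fin_cases i
        · exact hX
        · exact hY
    exact HV.main_pos hd hp hs
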